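/- Let G and H be finite digraphs such that: (1) ∃ has a winning strategy in the modified infinitely long (c+3)-colour colouring game on (G,H), in which ∀ can additionally win at a position (g,h) if there are palettes π, π' such that every pair from π^g × π'^g is an edge but not every pair from π^h × π'^h is an edge, or vice versa; (2) every partial embedding of H into itself of size two extends to an automorphism of H; and (3) there is no embedding of G into H. Then the class RRA of representable relation algebras is not the class of models of any first-order theory in the language of relation algebras using only the variables x_0,...,x_{c-1}. -/

import Mathlib

/-! ## Binary structures -/

/-- A binary structure: a carrier set together with a family of binary relations
indexed by a signature `σ` consisting of binary predicate symbols. -/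
structure BinStruct (σ : Type) : Type 1 where
  V : Type
  rel : σ → V → V → Prop

variable {σ : Type}

/-- The partial map `{(i,j),(i',j')}` is a partial homomorphism from `G` to `H`:
for all distinct elements of the domain and every binary predicate, the predicate
is preserved. -/
def PartialHom2 (G H : BinStruct σ) (i i' : G.V) (j j' : H.V) : Prop :=
  ∀ b : σ, (G.rel b i i' → H.rel b j j') ∧ (G.rel b i' i → H.rel b j' j)

/-- `f` is a (total) homomorphism from `G` to `H`. -/
def IsHom (G H : BinStruct σ) (f : G.V → H.V) : Prop :=
  ∀ (b : σ) (u v : G.V), u ≠ v → G.rel b u v → H.rel b (f u) (f v)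

/-! ## The rainbow atom structure -/

/-- Atoms of the rainbow relation algebra `B_{G,H}`. -/
inductive RbAtom (α β : Type) : Type
  | id : RbAtom α β
  | black : RbAtom α β
  | white : RbAtom α β
  | yellow : RbAtom α β
  | green (i : α) : RbAtom α β
  | red (j j' : β) : RbAtom α β

namespace RbAtom

/-- Converse of an atom: all atoms are self-converse except `(red j j')⌣ = red j' j`. -/
def conv {α β : Type} : RbAtom α β → RbAtom α β
  | red j j' => red j' j
  | a => a

end RbAtom

/-- The generating forbidden triples (I)–(VI) of the rainbow algebra `B_{G,H}`. -/
inductive BaseForbidden (G H : BinStruct σ) :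
    RbAtom G.V H.V → RbAtom G.V H.V → RbAtom G.V H.V → Prop
  | ident (a b : RbAtom G.V H.V) : a ≠ b → BaseForbidden G H .id a b
  | ggg (i i' i'' : G.V) : BaseForbidden G H (.green i) (.green i') (.green i'')
  | ggw (i i' : G.V) : BaseForbidden G H (.green i) (.green i') .white
  | yyy : BaseForbidden G H .yellow .yellow .yellow
  | yyb : BaseForbidden G H .yellow .yellow .black
  | rrr (j₁ j₂ j₂' j₃' j₁s j₃s : H.V) : ¬(j₁ = j₁s ∧ j₂ = j₂' ∧ j₃' = j₃s) →
      BaseForbidden G H (.red j₁ j₂) (.red j₂' j₃') (.red j₁s j₃s)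
  | ggr (i i' : G.V) (j j' : H.V) : ¬(i ≠ i' ∧ PartialHom2 G H i i' j j') →
      BaseForbidden G H (.green i) (.green i') (.red j j')

/-- A triple of atoms is forbidden if it is a Peircean transform of one of the
generating forbidden triples. -/
def Forbidden (G H : BinStruct σ) (a b c : RbAtom G.V H.V) : Prop :=
  ∃ x y z : RbAtom G.V H.V, BaseForbidden G H x y z ∧
    ((a, b, c) = (x, y, z) ∨ (a, b, c) = (x.conv, z, y) ∨ (a, b, c) = (z, y.conv, x) ∨
     (a, b, c) = (y.conv, x.conv, z.conv) ∨ (a, b, c) = (y, z.conv, x.conv) ∨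
     (a, b, c) = (z.conv, x, y.conv))

/-! ## The rainbow relation algebra (complex algebra of the atom structure) -/

/-- Composition in the complex algebra: `c ≤ X ; Y` iff there are `a ∈ X`, `b ∈ Y`
such that the triple `(a, b, c)` is not forbidden. -/
def rbComp (G H : BinStruct σ) (X Y : Set (RbAtom G.V H.V)) : Set (RbAtom G.V H.V) :=
  {c | ∃ a ∈ X, ∃ b ∈ Y, ¬ Forbidden G H a b c}

/-- Converse in the complex algebra. -/
def rbConv {α β : Type} (X : Set (RbAtom α β)) : Set (RbAtom α β) :=
  {a | RbAtom.conv a ∈ X}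

/-- The rainbow relation algebra `B_{G,H}` is completely representable: there is an
isomorphism onto an algebra of binary relations on some base set (with union,
complement, relational composition, converse and the identity relation) carrying
all suprema to unions. -/
def CompletelyRepresentable (G H : BinStruct σ) : Prop :=
  ∃ (X : Type) (θ : Set (RbAtom G.V H.V) → Set (X × X)),
    Function.Injective θ ∧
    (∀ S : Set (Set (RbAtom G.V H.V)), θ (⋃₀ S) = ⋃₀ (θ '' S)) ∧
    (∀ A : Set (RbAtom G.V H.V), θ Aᶜ = θ Set.univ \ θ A) ∧
    (∀ A B : Set (RbAtom G.V H.V),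
        θ (rbComp G H A B) = {p : X × X | ∃ z : X, (p.1, z) ∈ θ A ∧ (z, p.2) ∈ θ B}) ∧
    (∀ A : Set (RbAtom G.V H.V), θ (rbConv A) = {p : X × X | (p.2, p.1) ∈ θ A}) ∧
    θ {RbAtom.id} = {p : X × X | p.1 = p.2}

/-! ## The colouring game -/

/-- The set of vertices coloured (according to the interpretation `g`) with exactly
the colours in a palette `π`. -/
def PaletteSet {V : Type} {c : ℕ} (g : Fin c → Set V) (π : Set (Fin c)) : Set V :=
  {x | ∀ t : Fin c, x ∈ g t ↔ t ∈ π}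

/-- The position `(g,h)` of the `c`-colour colouring game on `(G,H)` is an immediate
win for ∀: (C1) some palette is realised in exactly one of the two structures, or
(C2) some pair of palettes and binary predicate produce a nonempty intersection in
exactly one of the two structures. -/
def ColWin (G H : BinStruct σ) (c : ℕ)
    (g : Fin c → Set G.V) (h : Fin c → Set H.V) : Prop :=
  (∃ π : Set (Fin c), Xor' (PaletteSet g π = ∅) (PaletteSet h π = ∅)) ∨
  (∃ (π π' : Set (Fin c)) (b : σ),
      Xor' ((PaletteSet g π ×ˢ PaletteSet g π') ∩ {q | G.rel b q.1 q.2} = ∅)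
           ((PaletteSet h π ×ˢ PaletteSet h π') ∩ {q | H.rel b q.1 q.2} = ∅))

/-- `∃` has a winning strategy in the infinitely long `c`-colour colouring game
`G^c_ω(G,H)` starting from the position `(g,h)`: there is an invariant family of safe
positions containing `(g,h)`, avoiding wins for `∀`, such that every move of `∀`
(a colour together with a set of vertices of either structure) has a response by `∃`
(a set of vertices of the other structure) staying in the family. -/
def ExSurvives (G H : BinStruct σ) (c : ℕ)
    (g : Fin c → Set G.V) (h : Fin c → Set H.V) : Prop :=
  ∃ Inv : (Fin c → Set G.V) → (Fin c → Set H.V) → Prop,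
    Inv g h ∧
    (∀ g' h', Inv g' h' → ¬ ColWin G H c g' h') ∧
    (∀ g' h', Inv g' h' → ∀ (t : Fin c) (S : Set G.V), ∃ T : Set H.V,
        Inv (Function.update g' t S) (Function.update h' t T)) ∧
    (∀ g' h', Inv g' h' → ∀ (t : Fin c) (T : Set H.V), ∃ S : Set G.V,
        Inv (Function.update g' t S) (Function.update h' t T))

/-- `∀` can force a win in the colouring game from the position `(g,h)`:
either the position is already a win for him, or he has a move such that
every response of `∃` leads to a position from which he can force a win. -/
inductive AllForcesWin (G H : BinStruct σ) (c : ℕ) :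
    (Fin c → Set G.V) → (Fin c → Set H.V) → Prop
  | now (g h) : ColWin G H c g h → AllForcesWin G H c g h
  | moveG (g h) (t : Fin c) (S : Set G.V) :
      (∀ T : Set H.V,
        AllForcesWin G H c (Function.update g t S) (Function.update h t T)) →
      AllForcesWin G H c g h
  | moveH (g h) (t : Fin c) (T : Set H.V) :
      (∀ S : Set G.V,
        AllForcesWin G H c (Function.update g t S) (Function.update h t T)) →
      AllForcesWin G H c g h

/-! ## Relation algebras, terms and formulas -/

/-- A relation algebra (Tarski's axioms): a Boolean algebra with an associative,
additive composition `;` with two-sided identity `1'`, and an additive involutive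
converse satisfying the Peircean/Tarski axioms. -/
class RelationAlgebra (A : Type) extends BooleanAlgebra A where
  comp : A → A → A
  conv : A → A
  one' : A
  comp_assoc : ∀ x y z : A, comp (comp x y) z = comp x (comp y z)
  comp_one' : ∀ x : A, comp x one' = x
  one'_comp : ∀ x : A, comp one' x = x
  sup_comp : ∀ x y z : A, comp (x ⊔ y) z = comp x z ⊔ comp y z
  comp_sup : ∀ x y z : A, comp x (y ⊔ z) = comp x y ⊔ comp x z
  conv_conv : ∀ x : A, conv (conv x) = x
  conv_sup : ∀ x y : A, conv (x ⊔ y) = conv x ⊔ conv y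
  conv_comp : ∀ x y : A, conv (comp x y) = comp (conv y) (conv x)
  tarski : ∀ x y : A, comp (conv x) (comp x y)ᶜ ⊓ y = ⊥

/-- A relation algebra is representable (a member of RRA) if it is isomorphic to a
subalgebra of an algebra of binary relations on some base set, with union,
complement, relational composition, converse and the identity relation. -/
def Representable (A : Type) [RelationAlgebra A] : Prop :=
  ∃ (X : Type) (θ : A → Set (X × X)),
    Function.Injective θ ∧
    (∀ a b : A, θ (a ⊔ b) = θ a ∪ θ b) ∧
    (∀ a : A, θ aᶜ = θ ⊤ \ θ a) ∧
    (∀ a b : A, θ (RelationAlgebra.comp a b) =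
        {p : X × X | ∃ z : X, (p.1, z) ∈ θ a ∧ (z, p.2) ∈ θ b}) ∧
    (∀ a : A, θ (RelationAlgebra.conv a) = {p : X × X | (p.2, p.1) ∈ θ a}) ∧
    θ RelationAlgebra.one' = {p : X × X | p.1 = p.2}

/-- A signature of relation-algebra operations on a carrier `A` (used to interpret
relation-algebra terms both in abstract relation algebras and in the concrete
rainbow complex algebras). -/
structure RAOps (A : Type) where
  bot : A
  top : A
  one' : A
  sup : A → A → A
  inf : A → A → A
  compl : A → A
  comp : A → A → A
  conv : A → A

/-- The operations of an abstract relation algebra. -/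
def RAOps.ofClass (A : Type) [RelationAlgebra A] : RAOps A :=
  ⟨⊥, ⊤, RelationAlgebra.one', (· ⊔ ·), (· ⊓ ·), (·ᶜ), RelationAlgebra.comp,
    RelationAlgebra.conv⟩

/-- The operations of the rainbow complex algebra `B_{G,H}`. -/
def rbOps (G H : BinStruct σ) : RAOps (Set (RbAtom G.V H.V)) :=
  ⟨∅, Set.univ, {RbAtom.id}, (· ∪ ·), (· ∩ ·), (·ᶜ), rbComp G H, rbConv⟩

/-- Terms in the language of relation algebras with variables `x_0, …, x_{c-1}`. -/
inductive RATerm (c : ℕ) : Type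
  | var (i : Fin c) : RATerm c
  | bot : RATerm c
  | top : RATerm c
  | one' : RATerm c
  | sup (s t : RATerm c) : RATerm c
  | inf (s t : RATerm c) : RATerm c
  | compl (t : RATerm c) : RATerm c
  | comp (s t : RATerm c) : RATerm c
  | conv (t : RATerm c) : RATerm c

namespace RATerm

variable {c : ℕ} {A : Type}

/-- Evaluation of a term under a total assignment of the variables. -/
def eval (ops : RAOps A) (v : Fin c → A) : RATerm c → A
  | var i => v i
  | bot => ops.bot
  | top => ops.top
  | one' => ops.one'
  | sup s t => ops.sup (s.eval ops v) (t.eval ops v)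
  | inf s t => ops.inf (s.eval ops v) (t.eval ops v)
  | compl t => ops.compl (t.eval ops v)
  | comp s t => ops.comp (s.eval ops v) (t.eval ops v)
  | conv t => ops.conv (t.eval ops v)

/-- Evaluation of a term under a partial assignment of the variables; defined
just when every variable of the term lies in the domain of the assignment. -/
def evalo (ops : RAOps A) (v : Fin c → Option A) : RATerm c → Option A
  | var i => v i
  | bot => some ops.bot
  | top => some ops.top
  | one' => some ops.one'
  | sup s t => (s.evalo ops v).bind fun a => (t.evalo ops v).map fun b => ops.sup a b
  | inf s t => (s.evalo ops v).bind fun a => (t.evalo ops v).map fun b => ops.inf a b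
  | compl t => (t.evalo ops v).map ops.compl
  | comp s t => (s.evalo ops v).bind fun a => (t.evalo ops v).map fun b => ops.comp a b
  | conv t => (t.evalo ops v).map ops.conv

/-- The variables occurring in a term. -/
def vars : RATerm c → Finset (Fin c)
  | var i => {i}
  | bot => ∅
  | top => ∅
  | one' => ∅
  | sup s t => s.vars ∪ t.vars
  | inf s t => s.vars ∪ t.vars
  | compl t => t.vars
  | comp s t => s.vars ∪ t.vars
  | conv t => t.vars

end RATerm

/-- First-order formulas in the language of relation algebras with variables
`x_0, …, x_{c-1}`. -/
inductive RAFormula (c : ℕ) : Type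
  | eq (s t : RATerm c) : RAFormula c
  | not (φ : RAFormula c) : RAFormula c
  | and (φ ψ : RAFormula c) : RAFormula c
  | ex (i : Fin c) (φ : RAFormula c) : RAFormula c

namespace RAFormula

variable {c : ℕ} {A : Type}

/-- Quantifier depth of a formula. -/
def qd : RAFormula c → ℕ
  | eq _ _ => 0
  | not φ => φ.qd
  | and φ ψ => max φ.qd ψ.qd
  | ex _ φ => φ.qd + 1

/-- Free variables of a formula. -/
def freeVars : RAFormula c → Finset (Fin c)
  | eq s t => s.vars ∪ t.vars
  | not φ => φ.freeVars
  | and φ ψ => φ.freeVars ∪ ψ.freeVars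
  | ex i φ => φ.freeVars \ {i}

/-- Satisfaction of a formula under a total assignment of the variables. -/
def Sat (ops : RAOps A) (v : Fin c → A) : RAFormula c → Prop
  | eq s t => s.eval ops v = t.eval ops v
  | not φ => ¬ Sat ops v φ
  | and φ ψ => Sat ops v φ ∧ Sat ops v ψ
  | ex i φ => ∃ a : A, Sat ops (Function.update v i a) φ

end RAFormula

/-! ## The pebble equivalence game on relation algebras -/

/-- The position `(α,β)` of the pebble game is good for `∃`: the two partial maps have
the same domain and the correspondence `t^α ↦ t^β` between the generated subalgebras
(given by evaluating terms whose variables lie in the common domain) is a well-defined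
isomorphism. -/
def GoodPos {A B : Type} (opsA : RAOps A) (opsB : RAOps B) (c : ℕ)
    (α : Fin c → Option A) (β : Fin c → Option B) : Prop :=
  (∀ i : Fin c, (α i).isSome ↔ (β i).isSome) ∧
  ∀ s t : RATerm c,
    (s.evalo opsA α = t.evalo opsA α ↔ s.evalo opsB β = t.evalo opsB β)

/-- `∃` has a winning strategy in the `c`-pebble, `n`-round equivalence game
`Γ^c_n(A, α, B, β)` (for finite `n`). -/
def ExWinsPebble {A B : Type} (opsA : RAOps A) (opsB : RAOps B) (c : ℕ) :
    ℕ → (Fin c → Option A) → (Fin c → Option B) → Prop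
  | 0, α, β => GoodPos opsA opsB c α β
  | n + 1, α, β => GoodPos opsA opsB c α β ∧
      (∀ (t : Fin c) (a : A), ∃ b : B,
        ExWinsPebble opsA opsB c n
          (Function.update α t (some a)) (Function.update β t (some b))) ∧
      (∀ (t : Fin c) (b : B), ∃ a : A,
        ExWinsPebble opsA opsB c n
          (Function.update α t (some a)) (Function.update β t (some b)))

/-- `∃` has a winning strategy in the infinitely long `c`-pebble equivalence game
`Γ^c_ω(A, α, B, β)`. -/
def ExWinsPebbleOmega {A B : Type} (opsA : RAOps A) (opsB : RAOps B) (c : ℕ)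
    (α : Fin c → Option A) (β : Fin c → Option B) : Prop :=
  ∃ Inv : (Fin c → Option A) → (Fin c → Option B) → Prop,
    Inv α β ∧
    (∀ α' β', Inv α' β' → GoodPos opsA opsB c α' β') ∧
    (∀ α' β', Inv α' β' → ∀ (t : Fin c) (a : A), ∃ b : B,
        Inv (Function.update α' t (some a)) (Function.update β' t (some b))) ∧
    (∀ α' β', Inv α' β' → ∀ (t : Fin c) (b : B), ∃ a : A,
        Inv (Function.update α' t (some a)) (Function.update β' t (some b)))

/-- `∃` has a winning strategy in the `c`-pebble, `n`-round equivalence game, where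
`n ≤ ω` (`n : ℕ∞`). -/
def ExWinsPebbleE {A B : Type} (opsA : RAOps A) (opsB : RAOps B) (c : ℕ)
    (n : ℕ∞) (α : Fin c → Option A) (β : Fin c → Option B) : Prop :=
  match n with
  | ⊤ => ExWinsPebbleOmega opsA opsB c α β
  | (m : ℕ) => ExWinsPebble opsA opsB c m α β

/-! ## The mirroring strategy -/

/-- The set of green subscripts of an element of a rainbow algebra. -/
def greenPart {V F : Type} (x : Set (RbAtom V F)) : Set V := {i | RbAtom.green i ∈ x}

/-- The element of the other rainbow algebra with the same non-green part as `x` and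
green part determined by `Y`. -/
def mirrorElt {V W F : Type} (x : Set (RbAtom V F)) (Y : Set W) : Set (RbAtom W F) :=
  fun a => match a with
  | RbAtom.green j => j ∈ Y
  | RbAtom.id => RbAtom.id ∈ x
  | RbAtom.black => RbAtom.black ∈ x
  | RbAtom.white => RbAtom.white ∈ x
  | RbAtom.yellow => RbAtom.yellow ∈ x
  | RbAtom.red j j' => RbAtom.red j j' ∈ x

/-- Inclusion of the first `c` colours into the `c+3` colours of the parallel game. -/
def liftCol {c : ℕ} (t : Fin c) : Fin (c + 3) := Fin.castLE (Nat.le_add_right c 3) t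

/-- A combined state of a play of the pebble game `Γ^c(B_{G,F}, B_{H,F})` together
with the parallel play of the colouring game `G^{c+3}_ω(G,H)`, recording also the
set of colours used so far. -/
structure MirrorState (c : ℕ) (G H F : BinStruct σ) : Type where
  α : Fin c → Option (Set (RbAtom G.V F.V))
  β : Fin c → Option (Set (RbAtom H.V F.V))
  g : Fin (c + 3) → Set G.V
  h : Fin (c + 3) → Set H.V
  used : Set (Fin (c + 3))

/-- The initial state: no pebbles placed, all vertices uncoloured, no colour used. -/
def mirrorInit (c : ℕ) (G H F : BinStruct σ) : MirrorState c G H F :=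
  ⟨fun _ => none, fun _ => none, fun _ => ∅, fun _ => ∅, ∅⟩

/-- `Inv` is a winning invariant witnessing a winning strategy for `∃` in the
colouring game `G^c_ω(G,H)` (from the initial position). -/
def IsColInvariant (G H : BinStruct σ) (c : ℕ)
    (Inv : (Fin c → Set G.V) → (Fin c → Set H.V) → Prop) : Prop :=
  Inv (fun _ => ∅) (fun _ => ∅) ∧
  (∀ g h, Inv g h → ¬ ColWin G H c g h) ∧
  (∀ g h, Inv g h → ∀ (t : Fin c) (S : Set G.V), ∃ T : Set H.V,
      Inv (Function.update g t S) (Function.update h t T)) ∧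
  (∀ g h, Inv g h → ∀ (t : Fin c) (T : Set H.V), ∃ S : Set G.V,
      Inv (Function.update g t S) (Function.update h t T))

/-- One round of the pebble game `Γ^c(B_{G,F}, B_{H,F})` in which `∃` plays the
mirroring strategy induced by the colouring-game winning strategy witnessed by the
invariant `Inv`: when `∀` plays pebble `t` on an element of one algebra, `∃` colours
the set of its green subscripts with colour `t` in the parallel colouring game,
obtains a response keeping the parallel play inside `Inv`, and answers with the
element with identical non-green part and green part determined by that response. -/
inductive MirrorStep (G H F : BinStruct σ) (c : ℕ)
    (Inv : (Fin (c + 3) → Set G.V) → (Fin (c + 3) → Set H.V) → Prop) :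
    MirrorState c G H F → MirrorState c G H F → Prop
  | fromG (s : MirrorState c G H F) (t : Fin c) (x : Set (RbAtom G.V F.V)) (Y : Set H.V) :
      Inv (Function.update s.g (liftCol t) (greenPart x))
          (Function.update s.h (liftCol t) Y) →
      MirrorStep G H F c Inv s
        ⟨Function.update s.α t (some x),
         Function.update s.β t (some (mirrorElt x Y)),
         Function.update s.g (liftCol t) (greenPart x),
         Function.update s.h (liftCol t) Y,
         insert (liftCol t) s.used⟩
  | fromH (s : MirrorState c G H F) (t : Fin c) (y : Set (RbAtom H.V F.V)) (X : Set G.V) :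
      Inv (Function.update s.g (liftCol t) X)
          (Function.update s.h (liftCol t) (greenPart y)) →
      MirrorStep G H F c Inv s
        ⟨Function.update s.α t (some (mirrorElt y X)),
         Function.update s.β t (some y),
         Function.update s.g (liftCol t) X,
         Function.update s.h (liftCol t) (greenPart y),
         insert (liftCol t) s.used⟩

/-- The states reachable in a play of the pebble game `Γ^c(B_{G,F}, B_{H,F})`
during which `∃` plays using the mirroring strategy. -/
def MirrorReachable (G H F : BinStruct σ) (c : ℕ)
    (Inv : (Fin (c + 3) → Set G.V) → (Fin (c + 3) → Set H.V) → Prop)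
    (s : MirrorState c G H F) : Prop :=
  Relation.ReflTransGen (MirrorStep G H F c Inv) (mirrorInit c G H F) s

section Digraphs


/-- A digraph: a set of vertices with a binary edge relation. -/
structure Digraph' : Type 1 where
  V : Type
  E : V → V → Prop

/-- The winning condition for ∀ in the (unmodified) colouring game on digraphs. -/
def ColWinD (G H : Digraph') (c : ℕ)
    (g : Fin c → Set G.V) (h : Fin c → Set H.V) : Prop :=
  (∃ π : Set (Fin c), Xor' (PaletteSet g π = ∅) (PaletteSet h π = ∅)) ∨
  (∃ π π' : Set (Fin c),
      Xor' ((PaletteSet g π ×ˢ PaletteSet g π') ∩ {q | G.E q.1 q.2} = ∅)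
           ((PaletteSet h π ×ˢ PaletteSet h π') ∩ {q | H.E q.1 q.2} = ∅))

/-- The winning condition for ∀ in the modified colouring game on digraphs: he can
additionally win if for some palettes every pair from `π^g × π'^g` is an edge but
not every pair from `π^h × π'^h` is an edge, or the other way round. -/
def ModColWinD (G H : Digraph') (c : ℕ)
    (g : Fin c → Set G.V) (h : Fin c → Set H.V) : Prop :=
  ColWinD G H c g h ∨
  (∃ π π' : Set (Fin c),
      Xor' (∀ p ∈ PaletteSet g π ×ˢ PaletteSet g π', G.E p.1 p.2)
           (∀ p ∈ PaletteSet h π ×ˢ PaletteSet h π', H.E p.1 p.2))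

/-- `∃` has a winning strategy in the modified infinitely long `c`-colour colouring
game on digraphs `(G,H)`, starting from the uncoloured position. -/
def ExSurvivesModD (G H : Digraph') (c : ℕ) : Prop :=
  ∃ Inv : (Fin c → Set G.V) → (Fin c → Set H.V) → Prop,
    Inv (fun _ => ∅) (fun _ => ∅) ∧
    (∀ g h, Inv g h → ¬ ModColWinD G H c g h) ∧
    (∀ g h, Inv g h → ∀ (t : Fin c) (S : Set G.V), ∃ T : Set H.V,
        Inv (Function.update g t S) (Function.update h t T)) ∧
    (∀ g h, Inv g h → ∀ (t : Fin c) (T : Set H.V), ∃ S : Set G.V,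
        Inv (Function.update g t S) (Function.update h t T))

/-- `f` is an embedding of the digraph `G` into the digraph `H`. -/
def IsDigraphEmbedding (G H : Digraph') (f : G.V → H.V) : Prop :=
  Function.Injective f ∧ ∀ u v : G.V, u ≠ v → (G.E u v ↔ H.E (f u) (f v))


/-! ## Atom-structure machinery -/

section RainbowMachinery

open RbAtom

/-- Consistent triangles `x → y` labelled `a`, `y → z` labelled `b`, `x → z` labelled `c`. -/
def Tri {α β : Type} (P : α → α → β → β → Prop) :
    RbAtom α β → RbAtom α β → RbAtom α β → Prop
  | .id, b, c => b = c
  | a, .id, c => a = c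
  | a, b, .id => a = b.conv
  | .green _, .green _, .green _ => False
  | .green _, .green _, .white => False
  | .green _, .white, .green _ => False
  | .white, .green _, .green _ => False
  | .yellow, .yellow, .yellow => False
  | .yellow, .yellow, .black => False
  | .yellow, .black, .yellow => False
  | .black, .yellow, .yellow => False
  | .red j₁ j₂, .red j₂' j₃, .red j₁' j₃' => j₁ = j₁' ∧ j₂ = j₂' ∧ j₃ = j₃'
  | .green i, .green i', .red j j' => P i i' j j'
  | .green i, .red j j', .green i' => P i i' j j'
  | .red j j', .green i, .green i' => P i' i j j'
  | _, _, _ => True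

variable {α β : Type} {P : α → α → β → β → Prop}

theorem rb_conv_conv (a : RbAtom α β) : a.conv.conv = a := by
  cases a <;> rfl

theorem rb_conv_inj {a b : RbAtom α β} (h : a.conv = b.conv) : a = b := by
  rw [← rb_conv_conv a, h, rb_conv_conv]

theorem tri_p1 (hP : ∀ i i' j j', P i i' j j' → P i' i j' j) {a b c : RbAtom α β}
    (h : Tri P a b c) : Tri P a.conv c b := by
  cases a <;> cases b <;> cases c <;> simp_all [Tri, RbAtom.conv]

theorem tri_p2 (hP : ∀ i i' j j', P i i' j j' → P i' i j' j) {a b c : RbAtom α β}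
    (h : Tri P a b c) : Tri P c b.conv a := by
  cases a <;> cases b <;> cases c <;> simp_all [Tri, RbAtom.conv]

theorem tri_p3 (hP : ∀ i i' j j', P i i' j j' → P i' i j' j) {a b c : RbAtom α β}
    (h : Tri P a b c) : Tri P b.conv a.conv c.conv := by
  cases a <;> cases b <;> cases c <;> simp_all [Tri, RbAtom.conv]

theorem tri_id_left {b c : RbAtom α β} : Tri P .id b c ↔ b = c := by
  cases b <;> cases c <;> simp [Tri]

theorem tri_id_mid {b c : RbAtom α β} : Tri P b .id c ↔ b = c := by
  cases b <;> cases c <;> simp [Tri]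

theorem tri_id_right {a b : RbAtom α β} : Tri P a b .id ↔ a = b.conv := by
  cases a <;> cases b <;> simp [Tri, RbAtom.conv]

theorem tri_white {a b : RbAtom α β} (ha : a ≠ .id) (hb : b ≠ .id)
    (h : ∀ i i', a = .green i → b = .green i' → False) : Tri P a b .white := by
  cases a <;> cases b <;> simp_all [Tri]

theorem tri_black {a b : RbAtom α β} (ha : a ≠ .id) (hb : b ≠ .id)
    (h : a = .yellow → b = .yellow → False) : Tri P a b .black := by
  cases a <;> cases b <;> simp_all [Tri]

/-- Any two pairs of non-identity labels have a common completion. -/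
theorem tri_fill (hF : ∀ i i', i ≠ i' → ∃ j j', P i i' j j') {p q p' q' : RbAtom α β}
    (h1 : p ≠ .id) (h2 : q ≠ .id) (h3 : p' ≠ .id) (h4 : q' ≠ .id) :
    ∃ f, Tri P p q f ∧ Tri P p' q' f := by
  have key : ∀ i i' : α, ∃ f : RbAtom α β,
      Tri P (.green i) (.green i') f ∧ Tri P .yellow .yellow f := by
    intro i i'
    by_cases h : i = i'
    · subst h; exact ⟨.id, by simp [Tri, RbAtom.conv]⟩
    · obtain ⟨j, j', hj⟩ := hF i i' h
      exact ⟨.red j j', by simpa [Tri] using hj⟩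
  by_cases hg : ∃ i i', p = .green i ∧ q = .green i'
  · obtain ⟨i, i', rfl, rfl⟩ := hg
    by_cases hy : p' = .yellow ∧ q' = .yellow
    · obtain ⟨rfl, rfl⟩ := hy
      exact key i i'
    · exact ⟨.black, tri_black h1 h2 (by simp), tri_black h3 h4 (by tauto)⟩
  by_cases hg' : ∃ i i', p' = .green i ∧ q' = .green i'
  · obtain ⟨i, i', rfl, rfl⟩ := hg'
    by_cases hy : p = .yellow ∧ q = .yellow
    · obtain ⟨rfl, rfl⟩ := hy
      obtain ⟨f, hf⟩ := key i i'
      exact ⟨f, hf.2, hf.1⟩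
    · exact ⟨.black, tri_black h1 h2 (by tauto), tri_black h3 h4 (by simp)⟩
  exact ⟨.white, tri_white h1 h2 (fun i i' a b => hg ⟨i, i', a, b⟩),
    tri_white h3 h4 (fun i i' a b => hg' ⟨i, i', a, b⟩)⟩

theorem tri_assoc (hP : ∀ i i' j j', P i i' j j' → P i' i j' j)
    (hF : ∀ i i', i ≠ i' → ∃ j j', P i i' j j') {a b c d e : RbAtom α β}
    (h1 : Tri P a b e) (h2 : Tri P e c d) : ∃ f, Tri P b c f ∧ Tri P a f d := by
  by_cases ha : a = .id
  · subst ha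
    rw [tri_id_left] at h1
    subst h1
    exact ⟨d, h2, tri_id_left.2 rfl⟩
  by_cases hb : b = .id
  · subst hb
    rw [tri_id_mid] at h1
    subst h1
    exact ⟨c, tri_id_left.2 rfl, h2⟩
  by_cases hc : c = .id
  · subst hc
    rw [tri_id_mid] at h2
    subst h2
    exact ⟨b, tri_id_mid.2 rfl, h1⟩
  by_cases hd : d = .id
  · subst hd
    rw [tri_id_right] at h2
    subst h2
    refine ⟨a.conv, ?_, tri_id_right.2 (rb_conv_conv a).symm⟩
    have := tri_p2 hP (tri_p1 hP h1)
    rwa [rb_conv_conv] at this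
  have ha' : a.conv ≠ .id := by intro h; apply ha; apply rb_conv_inj; rw [h]; rfl
  obtain ⟨f, hf, hf'⟩ := tri_fill hF hb hc ha' hd
  refine ⟨f, hf, ?_⟩
  have := tri_p1 hP hf'
  rwa [rb_conv_conv] at this

/-- Composition in the complex algebra. -/
def triComp (P : α → α → β → β → Prop) (X Y : Set (RbAtom α β)) : Set (RbAtom α β) :=
  {d | ∃ a ∈ X, ∃ b ∈ Y, Tri P a b d}

/-- The complex algebra as a relation algebra. -/
abbrev triRA (P : α → α → β → β → Prop) (hP : ∀ i i' j j', P i i' j j' → P i' i j' j)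
    (hF : ∀ i i', i ≠ i' → ∃ j j', P i i' j j') : RelationAlgebra (Set (RbAtom α β)) where
  comp := triComp P
  conv := rbConv
  one' := {.id}
  comp_assoc := by
    intro x y z
    ext d
    constructor
    · rintro ⟨e, ⟨a, ha, b, hb, h1⟩, c, hc, h2⟩
      obtain ⟨f, hf, hf'⟩ := tri_assoc hP hF h1 h2
      exact ⟨a, ha, f, ⟨b, hb, c, hc, hf⟩, hf'⟩
    · rintro ⟨a, ha, f, ⟨b, hb, c, hc, h1⟩, h2⟩
      obtain ⟨e, he, he'⟩ := tri_assoc hP hF (tri_p3 hP h1) (tri_p3 hP h2)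
      have h3 := tri_p3 hP he
      have h4 := tri_p3 hP he'
      simp only [rb_conv_conv] at h3 h4
      exact ⟨e.conv, ⟨a, ha, b, hb, h3⟩, c, hc, h4⟩
  comp_one' := by
    intro x
    ext d
    constructor
    · rintro ⟨a, ha, b, rfl, h⟩
      rw [tri_id_mid] at h
      exact h ▸ ha
    · intro h
      exact ⟨d, h, .id, rfl, tri_id_mid.2 rfl⟩
  one'_comp := by
    intro x
    ext d
    constructor
    · rintro ⟨a, rfl, b, hb, h⟩
      rw [tri_id_left] at h
      exact h ▸ hb
    · intro h
      exact ⟨.id, rfl, d, h, tri_id_left.2 rfl⟩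
  sup_comp := by
    intro x y z
    ext d
    constructor
    · rintro ⟨a, ha | ha, b, hb, h⟩
      · exact Or.inl ⟨a, ha, b, hb, h⟩
      · exact Or.inr ⟨a, ha, b, hb, h⟩
    · rintro (⟨a, ha, b, hb, h⟩ | ⟨a, ha, b, hb, h⟩)
      · exact ⟨a, Or.inl ha, b, hb, h⟩
      · exact ⟨a, Or.inr ha, b, hb, h⟩
  comp_sup := by
    intro x y z
    ext d
    constructor
    · rintro ⟨a, ha, b, hb | hb, h⟩
      · exact Or.inl ⟨a, ha, b, hb, h⟩
      · exact Or.inr ⟨a, ha, b, hb, h⟩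
    · rintro (⟨a, ha, b, hb, h⟩ | ⟨a, ha, b, hb, h⟩)
      · exact ⟨a, ha, b, Or.inl hb, h⟩
      · exact ⟨a, ha, b, Or.inr hb, h⟩
  conv_conv := by
    intro x
    ext d
    simp [rbConv, rb_conv_conv]
  conv_sup := by
    intro x y
    ext d
    simp [rbConv]
  conv_comp := by
    intro x y
    ext d
    constructor
    · rintro ⟨a, ha, b, hb, h⟩
      refine ⟨b.conv, ?_, a.conv, ?_, ?_⟩
      · simpa [rbConv, rb_conv_conv] using hb
      · simpa [rbConv, rb_conv_conv] using ha
      · have := tri_p3 hP h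
        rwa [rb_conv_conv] at this
    · rintro ⟨a, ha, b, hb, h⟩
      exact ⟨b.conv, hb, a.conv, ha, tri_p3 hP h⟩
  tarski := by
    intro x y
    ext d
    simp only [Set.inf_eq_inter, Set.mem_inter_iff, Set.bot_eq_empty, Set.mem_empty_iff_false,
      iff_false, not_and]
    rintro ⟨a, ha, b, hb, h⟩ hd
    exact hb ⟨a.conv, ha, d, hd, tri_p1 hP h⟩

/-- The operations of the complex algebra. -/
def triOps (P : α → α → β → β → Prop) : RAOps (Set (RbAtom α β)) :=
  ⟨∅, Set.univ, {.id}, (· ∪ ·), (· ∩ ·), (·ᶜ), triComp P, rbConv⟩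

theorem ofClass_tri (hP : ∀ i i' j j', P i i' j j' → P i' i j' j)
    (hF : ∀ i i', i ≠ i' → ∃ j j', P i i' j j') :
    @RAOps.ofClass _ (triRA P hP hF) = triOps P := rfl

theorem rbAtom_finite [Finite α] [Finite β] : Finite (RbAtom α β) := by
  let f : RbAtom α β → Fin 4 ⊕ α ⊕ (β × β) := fun a => match a with
    | .id => .inl 0
    | .black => .inl 1
    | .white => .inl 2
    | .yellow => .inl 3
    | .green i => .inr (.inl i)
    | .red j j' => .inr (.inr (j, j'))
  refine Finite.of_injective f ?_
  intro a b h
  cases a <;> cases b <;> simp_all [f]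

end RainbowMachinery

/-! ## The two algebras agree on formulas with `c` variables -/

section Transfer

/-- Compatibility of a pair of green subscripts with a pair of red subscripts. -/
def PC (G F : Digraph') (i i' : G.V) (j j' : F.V) : Prop :=
  i ≠ i' ∧ j ≠ j' ∧ (G.E i i' ↔ F.E j j') ∧ (G.E i' i ↔ F.E j' j)

theorem PC_symm (G F : Digraph') : ∀ i i' j j', PC G F i i' j j' → PC G F i' i j' j :=
  fun _ _ _ _ h => ⟨h.1.symm, h.2.1.symm, h.2.2.2, h.2.2.1⟩

/-- A winning invariant in the (unmodified) colouring game. -/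
structure ColSys (G H : Digraph') (n : ℕ)
    (Inv : (Fin n → Set G.V) → (Fin n → Set H.V) → Prop) : Prop where
  safe : ∀ g h, Inv g h → ¬ ColWinD G H n g h
  moveG : ∀ g h, Inv g h → ∀ (t : Fin n) (S : Set G.V), ∃ T : Set H.V,
        Inv (Function.update g t S) (Function.update h t T)
  moveH : ∀ g h, Inv g h → ∀ (t : Fin n) (T : Set H.V), ∃ S : Set G.V,
        Inv (Function.update g t S) (Function.update h t T)

variable {G H : Digraph'} {n : ℕ} {Inv : (Fin n → Set G.V) → (Fin n → Set H.V) → Prop}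

theorem ColSys.symm (S : ColSys G H n Inv) : ColSys H G n (fun h g => Inv g h) where
  safe := by
    intro h g hi hw
    apply S.safe g h hi
    rcases hw with ⟨π, hw⟩ | ⟨π, π', hw⟩
    · exact Or.inl ⟨π, (xor_comm _ _).mp hw⟩
    · exact Or.inr ⟨π, π', (xor_comm _ _).mp hw⟩
  moveG := fun h g hi t T => S.moveH g h hi t T
  moveH := fun h g hi t T => S.moveG g h hi t T

theorem ColSys.same (S : ColSys G H n Inv) {g h} (hi : Inv g h) (x : G.V) :
    ∃ y : H.V, ∀ t, x ∈ g t ↔ y ∈ h t := by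
  by_contra hc
  apply S.safe g h hi
  refine Or.inl ⟨{t | x ∈ g t}, Or.inr ⟨?_, ?_⟩⟩
  · rw [Set.eq_empty_iff_forall_notMem]
    intro y hy
    exact hc ⟨y, fun t => (hy t).symm⟩
  · intro he
    have : x ∈ PaletteSet g {t | x ∈ g t} := fun t => Iff.rfl
    rw [he] at this
    exact this

theorem ColSys.single (S : ColSys G H n Inv) {g h} (hi : Inv g h) {e : Fin n} {i : G.V} {k : H.V}
    (hg : g e = {i}) (hh : h e = {k}) (t : Fin n) : i ∈ g t ↔ k ∈ h t := by
  obtain ⟨y, hy⟩ := S.same hi i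
  have : y ∈ h e := (hy e).1 (by rw [hg]; rfl)
  rw [hh] at this
  obtain rfl : y = k := this
  exact hy t

theorem ColSys.eqv (S : ColSys G H n Inv) {g h} (hi : Inv g h) {e e' : Fin n} {i i' : G.V}
    {k k' : H.V} (hg : g e = {i}) (hh : h e = {k}) (hg' : g e' = {i'}) (hh' : h e' = {k'}) :
    i = i' ↔ k = k' := by
  have := S.single hi hg hh e'
  rw [hg', hh'] at this
  simpa using this

theorem palette_single {V : Type} {n : ℕ} {g : Fin n → Set V} {e : Fin n} {i : V}
    (hg : g e = {i}) : PaletteSet g {t | i ∈ g t} = {i} := by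
  ext x
  constructor
  · intro hx
    have : x ∈ g e := (hx e).2 (by simp [hg])
    rwa [hg] at this
  · rintro rfl
    exact fun t => Iff.rfl

theorem ColSys.edge (S : ColSys G H n Inv) {g h} (hi : Inv g h) {e e' : Fin n} {i i' : G.V}
    {k k' : H.V} (hg : g e = {i}) (hh : h e = {k}) (hg' : g e' = {i'}) (hh' : h e' = {k'}) :
    G.E i i' ↔ H.E k k' := by
  have a1 := palette_single hg
  have a2 := palette_single hg'
  have b1 := palette_single hh
  have b2 := palette_single hh'
  have c1 : {t | k ∈ h t} = {t | i ∈ g t} := by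
    ext t; exact (S.single hi hg hh t).symm
  have c2 : {t | k' ∈ h t} = {t | i' ∈ g t} := by
    ext t; exact (S.single hi hg' hh' t).symm
  rw [c1] at b1
  rw [c2] at b2
  by_contra hc
  apply S.safe g h hi
  refine Or.inr ⟨{t | i ∈ g t}, {t | i' ∈ g t}, ?_⟩
  rw [a1, a2, b1, b2]
  have q : ∀ (V : Type) (E : V → V → Prop) (u v : V),
      (({u} : Set V) ×ˢ ({v} : Set V)) ∩ {q | E q.1 q.2} = ∅ ↔ ¬ E u v := by
    intro V E u v
    rw [Set.eq_empty_iff_forall_notMem]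
    constructor
    · intro hh he
      exact hh (u, v) ⟨⟨rfl, rfl⟩, he⟩
    · rintro hh ⟨a, b⟩ ⟨⟨rfl, rfl⟩, he⟩
      exact hh he
  rw [q, q]
  unfold Xor'
  tauto

theorem ColSys.extend (S : ColSys G H n Inv) {g h} (hi : Inv g h) (i : G.V) {e e' : Fin n}
    (hne : e ≠ e') : ∃ k g' h', Inv g' h' ∧ g' e' = {i} ∧ h' e' = {k} ∧
      ∀ t, t ≠ e → t ≠ e' → g' t = g t ∧ h' t = h t := by
  obtain ⟨T, hT⟩ := S.moveG g h hi e {i}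
  obtain ⟨k, hk⟩ := S.same hT i
  obtain ⟨U, hU⟩ := S.moveH _ _ hT e' {k}
  refine ⟨k, _, _, hU, ?_, by simp, ?_⟩
  · rw [Function.update_self]
    have sub : ∀ x ∈ U, x = i := by
      intro x hx
      obtain ⟨y, hy⟩ := S.same hU x
      have h1 := (hy e').1 (by simpa using hx)
      have h1 : y = k := by simpa using h1
      subst h1
      have h2 := (hk e).1 (by simp)
      have h3 := (hy e).2 (by rw [Function.update_of_ne hne]; exact h2)
      rw [Function.update_of_ne hne] at h3
      simpa using h3
    obtain ⟨x, hx⟩ := S.symm.same hU k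
    have hxU : x ∈ U := by
      have := (hx e').1 (by simp)
      simpa using this
    ext z
    constructor
    · exact sub z
    · rintro rfl
      exact sub x hxU ▸ hxU
  · intro t h1 h2
    simp [Function.update_of_ne h1, Function.update_of_ne h2]

/-- Correspondence between atoms of the two algebras. -/
inductive AR {α α' β : Type} (M : α → α' → Prop) : RbAtom α β → RbAtom α' β → Prop
  | id : AR M .id .id
  | black : AR M .black .black
  | white : AR M .white .white
  | yellow : AR M .yellow .yellow
  | green (i k) : M i k → AR M (.green i) (.green k)
  | red (j j') : AR M (.red j j') (.red j j')

theorem AR.symm {α α' β : Type} {M : α → α' → Prop} {a : RbAtom α β} {a' : RbAtom α' β}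
    (h : AR M a a') : AR (fun k i => M i k) a' a := by
  cases h
  all_goals first | constructor
  assumption

theorem AR.mono {α α' β : Type} {M M' : α → α' → Prop} {a : RbAtom α β} {a' : RbAtom α' β}
    (h : AR M a a') (hM : ∀ i k, M i k → M' i k) : AR M' a a' := by
  cases h
  all_goals first | constructor
  apply hM
  assumption

theorem AR.conv {α α' β : Type} {M : α → α' → Prop} {a : RbAtom α β} {a' : RbAtom α' β}
    (h : AR M a a') : AR M a.conv a'.conv := by
  cases h
  all_goals first | constructor
  assumption

theorem AR.tri {α α' β : Type} {M : α → α' → Prop} {P : α → α → β → β → Prop}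
    {P' : α' → α' → β → β → Prop}
    (hM : ∀ i k i' k', M i k → M i' k' → (i = i' → k = k') ∧
      ∀ j j', P i i' j j' → P' k k' j j')
    {a b d : RbAtom α β} {a' b' d' : RbAtom α' β}
    (ha : AR M a a') (hb : AR M b b') (hd : AR M d d') (h : Tri P a b d) : Tri P' a' b' d' := by
  cases ha <;> cases hb <;> cases hd <;> simp_all [Tri, RbAtom.conv] <;> grind

/-- The position of the colouring game matches the assignments. -/
structure MatchPos {c : ℕ} {G H F : Digraph'}
    (Inv : (Fin (c + 3) → Set G.V) → (Fin (c + 3) → Set H.V) → Prop)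
    (v : Fin c → Set (RbAtom G.V F.V)) (w : Fin c → Set (RbAtom H.V F.V))
    (g : Fin (c + 3) → Set G.V) (h : Fin (c + 3) → Set H.V) : Prop where
  inv : Inv g h
  gr : ∀ t i, .green i ∈ v t ↔ i ∈ g (Fin.castAdd 3 t)
  gr' : ∀ t k, .green k ∈ w t ↔ k ∈ h (Fin.castAdd 3 t)
  ng : ∀ t a a', AR (fun _ _ => False) a a' → (a ∈ v t ↔ a' ∈ w t)

theorem MatchPos.symm {c : ℕ} {G H F : Digraph'}
    {Inv : (Fin (c + 3) → Set G.V) → (Fin (c + 3) → Set H.V) → Prop}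
    {v : Fin c → Set (RbAtom G.V F.V)} {w : Fin c → Set (RbAtom H.V F.V)}
    {g : Fin (c + 3) → Set G.V} {h : Fin (c + 3) → Set H.V} (m : MatchPos Inv v w g h) :
    MatchPos (fun h g => Inv g h) w v h g :=
  ⟨m.inv, m.gr', m.gr, fun t a a' ha => (m.ng t a' a ha.symm).symm⟩

/-- Pairs of vertices matched by a single extra colour. -/
def MP {V W : Type} {c : ℕ} (g : Fin (c + 3) → Set V) (h : Fin (c + 3) → Set W) (e : Fin 3)
    (i : V) (k : W) : Prop := g (Fin.natAdd c e) = {i} ∧ h (Fin.natAdd c e) = {k}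

theorem castAdd_ne_natAdd' {c : ℕ} (t : Fin c) (e : Fin 3) : Fin.castAdd 3 t ≠ Fin.natAdd c e := by
  intro h
  have := congrArg Fin.val h
  simp at this
  omega

variable {c : ℕ} {F : Digraph'}
    {Jnv : (Fin (c + 3) → Set G.V) → (Fin (c + 3) → Set H.V) → Prop}

theorem place (S : ColSys G H (c + 3) Jnv) {v : Fin c → Set (RbAtom G.V F.V)}
    {w : Fin c → Set (RbAtom H.V F.V)} {g h} (m : MatchPos Jnv v w g h)
    (a : RbAtom G.V F.V) (e : Fin 3) :
    ∃ e' a' g' h', MatchPos Jnv v w g' h' ∧ AR (MP g' h' e') a a' ∧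
      ∀ i k, MP g h e i k → MP g' h' e i k := by
  have triv : ∀ a', AR (MP g h e) a a' → ∃ e' a' g' h', MatchPos Jnv v w g' h' ∧
      AR (MP g' h' e') a a' ∧ ∀ i k, MP g h e i k → MP g' h' e i k :=
    fun a' ha => ⟨e, a', g, h, m, ha, fun _ _ h => h⟩
  cases a with
  | id => exact triv _ .id
  | black => exact triv _ .black
  | white => exact triv _ .white
  | yellow => exact triv _ .yellow
  | red j j' => exact triv _ (.red j j')
  | green i =>
    obtain ⟨e1, e2, h12, h1, h2⟩ : ∃ e1 e2 : Fin 3, e1 ≠ e2 ∧ e ≠ e1 ∧ e ≠ e2 := by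
      clear triv m
      revert e; decide
    obtain ⟨k, g', h', hi, hg, hh, ht⟩ := S.extend m.inv i
      (e := Fin.natAdd c e1) (e' := Fin.natAdd c e2) (by simpa using h12)
    refine ⟨e2, .green k, g', h', ⟨hi, ?_, ?_, m.ng⟩, .green _ _ ⟨hg, hh⟩, ?_⟩
    · intro t x
      rw [m.gr, (ht _ (castAdd_ne_natAdd' t e1) (castAdd_ne_natAdd' t e2)).1]
    · intro t x
      rw [m.gr', (ht _ (castAdd_ne_natAdd' t e1) (castAdd_ne_natAdd' t e2)).2]
    · intro x y hxy
      have := ht (Fin.natAdd c e) (by simpa using h1) (by simpa using h2)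
      exact ⟨this.1.trans hxy.1, this.2.trans hxy.2⟩

theorem MP_iso (S : ColSys G H (c + 3) Jnv) {g h} (hi : Jnv g h) (i k i' k')
    (h1 : ∃ e, MP g h e i k) (h2 : ∃ e, MP g h e i' k') : (i = i' → k = k') ∧
      ∀ j j', PC G F i i' j j' → PC H F k k' j j' := by
  obtain ⟨e, he, he'⟩ := h1
  obtain ⟨f, hf, hf'⟩ := h2
  have q := S.eqv hi he he' hf hf'
  have q1 := S.edge hi he he' hf hf'
  have q2 := S.edge hi hf hf' he he'
  refine ⟨q.1, fun j j' hj => ⟨?_, hj.2.1, ?_, ?_⟩⟩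
  · rw [← not_iff_not] at q
    exact q.1 hj.1
  · rw [← q1]; exact hj.2.2.1
  · rw [← q2]; exact hj.2.2.2

theorem comp_half (S : ColSys G H (c + 3) Jnv) {v : Fin c → Set (RbAtom G.V F.V)}
    {w : Fin c → Set (RbAtom H.V F.V)} {X Y : Set (RbAtom G.V F.V)} {X' Y' : Set (RbAtom H.V F.V)}
    (hX : ∀ g h, MatchPos Jnv v w g h → ∀ a a', AR (fun i k => ∃ e, MP g h e i k) a a' →
      a ∈ X → a' ∈ X')
    (hY : ∀ g h, MatchPos Jnv v w g h → ∀ a a', AR (fun i k => ∃ e, MP g h e i k) a a' →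
      a ∈ Y → a' ∈ Y')
    {g h} (m : MatchPos Jnv v w g h) {d d'} (hd : AR (fun i k => ∃ e, MP g h e i k) d d')
    (hm : d ∈ triComp (PC G F) X Y) : d' ∈ triComp (PC H F) X' Y' := by
  obtain ⟨a, ha, b, hb, ht⟩ := hm
  suffices hs : ∃ g' h' a' b', MatchPos Jnv v w g' h' ∧
      AR (fun i k => ∃ e, MP g' h' e i k) a a' ∧ AR (fun i k => ∃ e, MP g' h' e i k) b b' ∧
      AR (fun i k => ∃ e, MP g' h' e i k) d d' by
    obtain ⟨g', h', a', b', m', ha', hb', hd'⟩ := hs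
    exact ⟨a', hX g' h' m' a a' ha' ha, b', hY g' h' m' b b' hb' hb,
      AR.tri (MP_iso S m'.inv) ha' hb' hd' ht⟩
  have ngc : AR (fun (_ : G.V) (_ : H.V) => False) d d' → ∃ g' h' a' b', MatchPos Jnv v w g' h' ∧
      AR (fun i k => ∃ e, MP g' h' e i k) a a' ∧ AR (fun i k => ∃ e, MP g' h' e i k) b b' ∧
      AR (fun i k => ∃ e, MP g' h' e i k) d d' := by
    intro hd
    obtain ⟨e1, a', g1, h1, m1, ha1, -⟩ := place S m a 0
    obtain ⟨e2, b', g2, h2, m2, hb2, hk⟩ := place S m1 b e1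
    exact ⟨g2, h2, a', b', m2, ha1.mono fun i k h => ⟨e1, hk i k h⟩,
      hb2.mono fun i k h => ⟨e2, h⟩, hd.mono fun _ _ h => h.elim⟩
  cases hd with
  | id => exact ngc .id
  | black => exact ngc .black
  | white => exact ngc .white
  | yellow => exact ngc .yellow
  | red j j' => exact ngc (.red j j')
  | green i k hik =>
    obtain ⟨e, hik⟩ := hik
    have ca : (∃ b', AR (fun (_ : G.V) (_ : H.V) => False) b b') →
        ∃ g' h' a' b', MatchPos Jnv v w g' h' ∧
      AR (fun i k => ∃ e, MP g' h' e i k) a a' ∧ AR (fun i k => ∃ e, MP g' h' e i k) b b' ∧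
      AR (fun i k => ∃ e, MP g' h' e i k) (.green i : RbAtom G.V F.V)
        (.green k : RbAtom H.V F.V) := by
      rintro ⟨b', hb'⟩
      obtain ⟨e1, a', g1, h1, m1, ha1, hk⟩ := place S m a e
      exact ⟨g1, h1, a', b', m1, ha1.mono fun i k h => ⟨e1, h⟩, hb'.mono fun _ _ h => h.elim,
        .green _ _ ⟨e, hk _ _ hik⟩⟩
    have cb : (∃ a', AR (fun (_ : G.V) (_ : H.V) => False) a a') →
        ∃ g' h' a' b', MatchPos Jnv v w g' h' ∧
      AR (fun i k => ∃ e, MP g' h' e i k) a a' ∧ AR (fun i k => ∃ e, MP g' h' e i k) b b' ∧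
      AR (fun i k => ∃ e, MP g' h' e i k) (.green i : RbAtom G.V F.V)
        (.green k : RbAtom H.V F.V) := by
      rintro ⟨a', ha'⟩
      obtain ⟨e1, b', g1, h1, m1, hb1, hk⟩ := place S m b e
      exact ⟨g1, h1, a', b', m1, ha'.mono fun _ _ h => h.elim, hb1.mono fun i k h => ⟨e1, h⟩,
        .green _ _ ⟨e, hk _ _ hik⟩⟩
    cases b with
    | id => exact ca ⟨_, .id⟩
    | black => exact ca ⟨_, .black⟩
    | white => exact ca ⟨_, .white⟩
    | yellow => exact ca ⟨_, .yellow⟩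
    | red j j' => exact ca ⟨_, .red j j'⟩
    | green i' =>
      cases a with
      | id => exact cb ⟨_, .id⟩
      | black => exact cb ⟨_, .black⟩
      | white => exact cb ⟨_, .white⟩
      | yellow => exact cb ⟨_, .yellow⟩
      | red j j' => exact cb ⟨_, .red j j'⟩
      | green i'' => simp [Tri] at ht

theorem AR_id {α α' β : Type} {M : α → α' → Prop} {a : RbAtom α β} {a' : RbAtom α' β}
    (h : AR M a a') : a = .id ↔ a' = .id := by
  cases h <;> simp

theorem term_transfer (S : ColSys G H (c + 3) Jnv) {v : Fin c → Set (RbAtom G.V F.V)}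
    {w : Fin c → Set (RbAtom H.V F.V)} (t : RATerm c) :
    ∀ g h, MatchPos Jnv v w g h → ∀ a a', AR (fun i k => ∃ e, MP g h e i k) a a' →
      (a ∈ t.eval (triOps (PC G F)) v ↔ a' ∈ t.eval (triOps (PC H F)) w) := by
  induction t with
  | var t =>
    intro g h m a a' ha
    simp only [RATerm.eval]
    cases ha with
    | id => exact m.ng t _ _ .id
    | black => exact m.ng t _ _ .black
    | white => exact m.ng t _ _ .white
    | yellow => exact m.ng t _ _ .yellow
    | red j j' => exact m.ng t _ _ (.red j j')
    | green i k hik =>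
      obtain ⟨e, h1, h2⟩ := hik
      rw [m.gr, m.gr']
      exact S.single m.inv h1 h2 _
  | bot => intro g h m a a' ha; exact Iff.rfl
  | top => intro g h m a a' ha; exact Iff.rfl
  | one' => intro g h m a a' ha; exact AR_id ha
  | sup s t hs ht =>
    intro g h m a a' ha
    exact or_congr (hs g h m a a' ha) (ht g h m a a' ha)
  | inf s t hs ht =>
    intro g h m a a' ha
    exact and_congr (hs g h m a a' ha) (ht g h m a a' ha)
  | compl s hs =>
    intro g h m a a' ha
    exact not_congr (hs g h m a a' ha)
  | conv s hs =>
    intro g h m a a' ha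
    exact hs g h m _ _ ha.conv
  | comp s t hs ht =>
    intro g h m a a' ha
    have key : ∀ (X : Set (RbAtom G.V F.V)) (X' : Set (RbAtom H.V F.V)),
        (∀ g h, MatchPos Jnv v w g h → ∀ a a', AR (fun i k => ∃ e, MP g h e i k) a a' →
          (a ∈ X ↔ a' ∈ X')) →
        (∀ h g, MatchPos (fun h g => Jnv g h) w v h g → ∀ a a',
          AR (fun i k => ∃ e, MP h g e i k) a a' → a ∈ X' → a' ∈ X) := by
      intro X X' hX h g m a a' ha
      refine (hX g h m.symm a' a (ha.symm.mono ?_)).2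
      rintro i k ⟨e, h1, h2⟩
      exact ⟨e, h2, h1⟩
    constructor
    · exact comp_half S (fun g h m a a' ha => (hs g h m a a' ha).1)
        (fun g h m a a' ha => (ht g h m a a' ha).1) m ha
    · refine comp_half S.symm (key _ _ hs) (key _ _ ht) m.symm (ha.symm.mono ?_)
      rintro i k ⟨e, h1, h2⟩
      exact ⟨e, h2, h1⟩

theorem eq_half (S : ColSys G H (c + 3) Jnv) {v : Fin c → Set (RbAtom G.V F.V)}
    {w : Fin c → Set (RbAtom H.V F.V)} {g h} (m : MatchPos Jnv v w g h) (s t : RATerm c)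
    (he : s.eval (triOps (PC H F)) w = t.eval (triOps (PC H F)) w) :
    s.eval (triOps (PC G F)) v = t.eval (triOps (PC G F)) v := by
  ext a
  obtain ⟨e, a', g', h', m', ha, -⟩ := place S m a 0
  have ha' : AR (fun i k => ∃ e, MP g' h' e i k) a a' := ha.mono fun _ _ h => ⟨e, h⟩
  rw [term_transfer S s g' h' m' a a' ha', term_transfer S t g' h' m' a a' ha', he]

theorem match_update {v : Fin c → Set (RbAtom G.V F.V)}
    {w : Fin c → Set (RbAtom H.V F.V)} {g h} (m : MatchPos Jnv v w g h) (t : Fin c)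
    (x : Set (RbAtom G.V F.V)) (T : Set H.V)
    (hT : Jnv (Function.update g (Fin.castAdd 3 t) (greenPart x))
      (Function.update h (Fin.castAdd 3 t) T)) :
    MatchPos Jnv (Function.update v t x) (Function.update w t (mirrorElt x T))
      (Function.update g (Fin.castAdd 3 t) (greenPart x))
      (Function.update h (Fin.castAdd 3 t) T) := by
  refine ⟨hT, ?_, ?_, ?_⟩
  · intro s i
    by_cases hs : s = t
    · subst hs; simp [greenPart]
    · rw [Function.update_of_ne hs, Function.update_of_ne (by simpa using hs)]
      exact m.gr s i
  · intro s i
    by_cases hs : s = t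
    · subst hs; simp only [Function.update_self]; exact Iff.rfl
    · rw [Function.update_of_ne hs, Function.update_of_ne (by simpa using hs)]
      exact m.gr' s i
  · intro s a a' ha
    by_cases hs : s = t
    · subst hs
      simp only [Function.update_self]
      cases ha <;> first | exact Iff.rfl | exact False.elim (by assumption)
    · rw [Function.update_of_ne hs, Function.update_of_ne hs]
      exact m.ng s a a' ha

theorem sat_transfer (S : ColSys G H (c + 3) Jnv) (φ : RAFormula c) :
    ∀ (v : Fin c → Set (RbAtom G.V F.V)) (w : Fin c → Set (RbAtom H.V F.V)) (g h),
      MatchPos Jnv v w g h →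
      (φ.Sat (triOps (PC G F)) v ↔ φ.Sat (triOps (PC H F)) w) := by
  induction φ with
  | eq s t =>
    intro v w g h m
    exact ⟨eq_half S.symm m.symm s t, eq_half S m s t⟩
  | not φ ih =>
    intro v w g h m
    exact not_congr (ih v w g h m)
  | and φ ψ h1 h2 =>
    intro v w g h m
    exact and_congr (h1 v w g h m) (h2 v w g h m)
  | ex t φ ih =>
    intro v w g h m
    constructor
    · rintro ⟨x, hx⟩
      obtain ⟨T, hT⟩ := S.moveG g h m.inv (Fin.castAdd 3 t) (greenPart x)
      exact ⟨_, (ih _ _ _ _ (match_update m t x T hT)).1 hx⟩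
    · rintro ⟨x, hx⟩
      obtain ⟨T, hT⟩ := S.moveH g h m.inv (Fin.castAdd 3 t) (greenPart x)
      have := (match_update (Jnv := fun h g => Jnv g h) m.symm t x T hT).symm
      exact ⟨_, (ih _ _ _ _ this).2 hx⟩

end Transfer

/-! ## Non-representability -/

section NonRep

theorem not_rep (G H : Digraph') [Finite G.V] [Finite H.V] (hne : Nonempty G.V → Nonempty H.V)
    (hF : ∀ i i', i ≠ i' → ∃ j j', PC G H i i' j j')
    (h3 : ¬ ∃ f : G.V → H.V, IsDigraphEmbedding G H f) :
    ¬ @Representable _ (triRA (PC G H) (PC_symm G H) hF) := by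
  rintro ⟨X, θ, hinj, hsup, hcompl, hcomp, hconv, hid⟩
  replace hsup : ∀ A B : Set (RbAtom G.V H.V), θ (A ∪ B) = θ A ∪ θ B := hsup
  replace hcompl : ∀ A : Set (RbAtom G.V H.V), θ Aᶜ = θ Set.univ \ θ A := hcompl
  replace hcomp : ∀ A B : Set (RbAtom G.V H.V), θ (triComp (PC G H) A B) =
    {p : X × X | ∃ z : X, (p.1, z) ∈ θ A ∧ (z, p.2) ∈ θ B} := hcomp
  replace hconv : ∀ A : Set (RbAtom G.V H.V), θ (rbConv A) =
    {p : X × X | (p.2, p.1) ∈ θ A} := hconv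
  have hfin : Finite (RbAtom G.V H.V) := rbAtom_finite
  have hempty : θ ∅ = ∅ := by
    have := hcompl Set.univ
    rwa [Set.compl_univ, Set.diff_self] at this
  have hmono : ∀ A B, A ⊆ B → θ A ⊆ θ B := by
    intro A B hAB
    rw [← Set.union_eq_self_of_subset_left hAB, hsup]
    exact Set.subset_union_left
  have hinter : ∀ A B p, p ∈ θ A → p ∈ θ B → p ∈ θ (A ∩ B) := by
    intro A B p hA hB
    have e : A ∩ B = (Aᶜ ∪ Bᶜ)ᶜ := by rw [Set.compl_union, compl_compl, compl_compl]
    rw [e, hcompl, hsup, hcompl A, hcompl B]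
    refine ⟨hmono _ _ (Set.subset_univ _) hA, ?_⟩
    rintro (h | h)
    · exact h.2 hA
    · exact h.2 hB
  have hatom : ∀ S : Set (RbAtom G.V H.V), ∀ p ∈ θ S, ∃ d ∈ S, p ∈ θ {d} := by
    intro S
    induction S, S.toFinite using Set.Finite.induction_on with
    | empty => intro p hp; rw [hempty] at hp; exact hp.elim
    | @insert a s ha hs ih =>
      intro p hp
      rw [Set.insert_eq, hsup] at hp
      rcases hp with hp | hp
      · exact ⟨a, Set.mem_insert _ _, hp⟩
      · obtain ⟨d, hd, hd'⟩ := ih p hp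
        exact ⟨d, Set.mem_insert_of_mem _ hd, hd'⟩
  have huniq : ∀ S d p, p ∈ θ S → p ∈ θ {d} → d ∈ S := by
    intro S d p h1 h2
    by_contra hc
    have := hinter _ _ _ h1 h2
    rw [Set.inter_singleton_eq_empty.2 hc, hempty] at this
    exact this
  obtain ⟨⟨x, y⟩, hxy⟩ : (θ {.black}).Nonempty := by
    rw [Set.nonempty_iff_ne_empty, ← hempty]
    intro h
    exact Set.singleton_ne_empty _ (hinj h)
  have hz : ∀ i : G.V, ∃ z, (x, z) ∈ θ {.green i} ∧ (z, y) ∈ θ {.yellow} := by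
    intro i
    have h1 : (x, y) ∈ θ (triComp (PC G H) {.green i} {.yellow}) := by
      refine hmono {.black} _ ?_ hxy
      rintro _ rfl
      exact ⟨_, rfl, _, rfl, by simp [Tri]⟩
    rw [hcomp] at h1
    exact h1
  choose z hz1 hz2 using hz
  have hc : ∀ d u v, (u, v) ∈ θ {d} → (v, u) ∈ θ {d.conv} := by
    intro d u v h
    have e : rbConv {d} = {d.conv} := by
      ext a
      simp only [rbConv, Set.mem_setOf_eq, Set.mem_singleton_iff]
      constructor
      · rintro rfl; rw [rb_conv_conv]
      · rintro rfl; rw [rb_conv_conv]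
    rw [← e, hconv]
    exact h
  have htri : ∀ a b d u v w, (u, v) ∈ θ {a} → (v, w) ∈ θ {b} → (u, w) ∈ θ {d} →
      Tri (PC G H) a b d := by
    intro a b d u v w h1 h2 h3
    have h4 : (u, w) ∈ θ (triComp (PC G H) {a} {b}) := by
      rw [hcomp]; exact ⟨v, h1, h2⟩
    obtain ⟨_, rfl, _, rfl, h⟩ := huniq _ _ _ h4 h3
    exact h
  have hlab : ∀ i i', i ≠ i' → ∃ j j', (z i, z i') ∈ θ {.red j j'} ∧ PC G H i i' j j' := by
    intro i i' hii
    have h4 : (z i, z i') ∈ θ (triComp (PC G H) {.green i} {.green i'}) := by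
      rw [hcomp]; exact ⟨x, hc _ _ _ (hz1 i), hz1 i'⟩
    obtain ⟨d, -, hd⟩ := hatom _ _ h4
    have t1 := htri _ _ _ _ _ _ (hc _ _ _ (hz1 i)) (hz1 i') hd
    have t2 := htri _ _ _ _ _ _ (hz2 i) (hc _ _ _ (hz2 i')) hd
    cases d <;> simp [Tri, RbAtom.conv] at t1 t2
    · exact (hii t1).elim
    · exact ⟨_, _, hd, t1⟩
  rcases isEmpty_or_nonempty G.V with hG | hG
  · exact h3 ⟨fun u => hG.elim u, fun u => hG.elim u, fun u => hG.elim u⟩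
  have hHne : Nonempty H.V := hne hG
  choose! J J' hJ hPC using hlab
  have hJ' : ∀ i i', i ≠ i' → J' i i' = J i' i := by
    intro i i' h
    have h1 := huniq _ _ _ (hc _ _ _ (hJ i i' h)) (hJ i' i h.symm)
    simp [RbAtom.conv] at h1
    exact h1.1.symm
  have hJJ : ∀ i i' i'', i ≠ i' → i ≠ i'' → J i i' = J i i'' := by
    intro i i' i'' h1 h2
    by_cases h : i' = i''
    · rw [h]
    have := htri _ _ _ _ _ _ (hJ i i' h1) (hJ i' i'' h) (hJ i i'' h2)
    simp [Tri] at this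
    exact this.1
  have hf : ∀ i, ∃ f : H.V, ∀ i', i ≠ i' → f = J i i' := by
    intro i
    by_cases h : ∃ i', i ≠ i'
    · obtain ⟨i', hi⟩ := h
      exact ⟨J i i', fun i'' h'' => hJJ _ _ _ hi h''⟩
    · obtain ⟨f⟩ := hne ⟨i⟩
      exact ⟨f, fun i' h' => (h ⟨i', h'⟩).elim⟩
  choose f hf using hf
  have key : ∀ i i', i ≠ i' → PC G H i i' (f i) (f i') := by
    intro i i' h
    rw [hf i i' h, hf i' i h.symm, ← hJ' i i' h]
    exact hPC i i' h
  refine h3 ⟨f, ?_, fun u v h => (key u v h).2.2.1⟩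
  intro u v h
  by_contra hne
  exact (key u v hne).2.1 h

end NonRep

/-! ## Representability of the algebra built from `H` and `H` -/

section Rep

/-- A good finite atomic network on the nodes `0, …, n-1`. -/
structure GoodNet (H : Digraph') (n : ℕ) (N : ℕ → ℕ → RbAtom H.V H.V) : Prop where
  refl : ∀ x < n, N x x = .id
  ident : ∀ x < n, ∀ y < n, N x y = .id → x = y
  conv : ∀ x < n, ∀ y < n, N y x = (N x y).conv
  tri : ∀ x < n, ∀ y < n, ∀ z < n, Tri (PC H H) (N x y) (N y z) (N x z)
  cone : ∀ x < n, ∀ y < n, ∃ f : H.V → H.V,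
    (∀ i i', i ≠ i' → PC H H i i' (f i) (f i')) ∧
    ∀ w < n, ∀ w' < n, ∀ i i', w ≠ w' → N x w = .green i → N x w' = .green i' →
      N w y = .yellow → N w' y = .yellow → N w w' = .red (f i) (f i')

/-- Two-point homogeneity. -/
def Homog (H : Digraph') : Prop := ∀ i i' j j', PC H H i i' j j' →
  ∃ f : H.V → H.V, (∀ u v, u ≠ v → PC H H u v (f u) (f v)) ∧ f i = j ∧ f i' = j'

theorem conv_green {α β : Type} {a : RbAtom α β} {i : α} (h : a.conv = .green i) :
    a = .green i := by
  cases a <;> simp_all [RbAtom.conv]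

theorem conv_yellow {α β : Type} {a : RbAtom α β} (h : a.conv = .yellow) :
    a = .yellow := by
  cases a <;> simp_all [RbAtom.conv]

theorem conv_id {α β : Type} {a : RbAtom α β} (h : a.conv = .id) :
    a = .id := by
  cases a <;> simp_all [RbAtom.conv]

/-- A cone all of whose members are among two nodes `x`, `y`. -/
theorem small_cone {H : Digraph'} (hH : Homog H) (e : RbAtom H.V H.V) (mx my : H.V → Prop)
    (ux : ∀ i i', mx i → mx i' → i = i') (uy : ∀ i i', my i → my i' → i = i')
    (h : ∀ i i', mx i → my i' → ∃ j j', e = .red j j' ∧ PC H H i i' j j') :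
    ∃ f : H.V → H.V, (∀ i i', i ≠ i' → PC H H i i' (f i) (f i')) ∧
      ∀ i i', mx i → my i' → e = .red (f i) (f i') := by
  by_cases hc : ∃ i i', mx i ∧ my i'
  · obtain ⟨i, i', hi, hi'⟩ := hc
    obtain ⟨j, j', he, hp⟩ := h i i' hi hi'
    obtain ⟨f, hf, rfl, rfl⟩ := hH i i' j j' hp
    refine ⟨f, hf, fun k k' hk hk' => ?_⟩
    rw [ux k i hk hi, uy k' i' hk' hi', he]
  · exact ⟨fun x => x, fun i i' h => ⟨h, h, Iff.rfl, Iff.rfl⟩, fun i i' hi hi' => (hc ⟨i, i', hi, hi'⟩).elim⟩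

theorem forced_red {H : Digraph'} {e : RbAtom H.V H.V} {i i' : H.V}
    (h1 : Tri (PC H H) (.green i) e (.green i')) (h2 : Tri (PC H H) e .yellow .yellow)
    (h3 : e ≠ .id) : ∃ j j', e = .red j j' ∧ PC H H i i' j j' := by
  cases e <;> simp_all [Tri]

theorem forced_red' {H : Digraph'} {e : RbAtom H.V H.V} {i i' : H.V}
    (h1 : Tri (PC H H) (.green i) (.green i') e) (h2 : Tri (PC H H) .yellow .yellow e) :
    e ≠ .white ∧ e ≠ .black := by
  cases e <;> simp_all [Tri]

theorem tri_gen {H : Digraph'} {e l l' : RbAtom H.V H.V} (he : e ≠ .id)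
    (hl : l = .white ∨ l = .black ∨ ∃ j j', l = .red j j')
    (hl' : l' = .white ∨ l' = .black ∨ ∃ j j', l' = .red j j')
    (hr : (∃ j j', l = .red j j') → (∃ j j', l' = .red j j') → Tri (PC H H) e l l') :
    Tri (PC H H) e l l' := by
  by_cases h : (∃ j j', l = .red j j') ∧ (∃ j j', l' = .red j j')
  · exact hr h.1 h.2
  clear hr
  rcases hl with rfl | rfl | ⟨j, j', rfl⟩ <;> rcases hl' with rfl | rfl | ⟨k, k', rfl⟩ <;>
    cases e <;> simp [Tri] at he h ⊢

theorem tri_green_swap {H : Digraph'} {e : RbAtom H.V H.V} {i i' : H.V}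
    (h : Tri (PC H H) e (.green i') (.green i)) : Tri (PC H H) (.green i) e (.green i') := by
  cases e <;> simp [Tri] at h ⊢ <;> first | exact h | exact h.symm

set_option maxHeartbeats 2000000 in
theorem good_ext {H : Digraph'} (hH : Homog H) {n : ℕ} {N : ℕ → ℕ → RbAtom H.V H.V}
    (hN : GoodNet H n N) {x y : ℕ} (hx : x < n) (hy : y < n) {a b : RbAtom H.V H.V}
    (hab : Tri (PC H H) a b (N x y)) (hw : ¬ ∃ w < n, N x w = a ∧ N w y = b) :
    ∃ N', GoodNet H (n + 1) N' ∧ (∀ u < n, ∀ v < n, N' u v = N u v) ∧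
      N' x n = a ∧ N' n y = b := by
  have hP := PC_symm H H
  have ha : a ≠ .id := by
    rintro rfl
    rw [tri_id_left] at hab
    exact hw ⟨x, hx, hN.refl x hx, hab.symm⟩
  have hb : b ≠ .id := by
    rintro rfl
    rw [tri_id_mid] at hab
    exact hw ⟨y, hy, hab.symm, hN.refl y hy⟩
  have hb' : b.conv ≠ .id := fun h => hb (conv_id h)
  obtain ⟨fA, hfA, hA⟩ := hN.cone x hx y hy
  obtain ⟨fB, hfB, hB⟩ := hN.cone y hy x hx
  -- the labels of the edges into the new node
  have hL : ∀ w, ∃ l : RbAtom H.V H.V, w < n →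
      (w = x → l = a) ∧ (w = y → l = b.conv) ∧
      (w ≠ x → w ≠ y → Tri (PC H H) (N w x) a l ∧ Tri (PC H H) (N w y) b.conv l ∧
        (l = .white ∨ l = .black ∨
          (∃ i i', a = .green i ∧ b = .yellow ∧ N x w = .green i' ∧ N w y = .yellow ∧
            l = .red (fA i') (fA i)) ∨
          (∃ i i', a = .yellow ∧ b = .green i ∧ N y w = .green i' ∧ N w x = .yellow ∧
            l = .red (fB i') (fB i)))) := by
    intro w
    by_cases hwn : w < n
    swap
    · exact ⟨.id, fun h => (hwn h).elim⟩
    by_cases hwx : w = x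
    · refine ⟨a, fun _ => ⟨fun _ => rfl, ?_, fun h => (h hwx).elim⟩⟩
      rintro rfl
      subst hwx
      rw [hN.refl w hwn, tri_id_right] at hab
      exact hab
    by_cases hwy : w = y
    · exact ⟨b.conv, fun _ => ⟨fun h => (hwx h).elim, fun _ => rfl, fun _ h => (h hwy).elim⟩⟩
    have hp : N w x ≠ .id := fun h => hwx (hN.ident w hwn x hx h)
    have hq : N w y ≠ .id := fun h => hwy (hN.ident w hwn y hy h)
    suffices hs : ∃ l, Tri (PC H H) (N w x) a l ∧ Tri (PC H H) (N w y) b.conv l ∧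
        (l = .white ∨ l = .black ∨
          (∃ i i', a = .green i ∧ b = .yellow ∧ N x w = .green i' ∧ N w y = .yellow ∧
            l = .red (fA i') (fA i)) ∨
          (∃ i i', a = .yellow ∧ b = .green i ∧ N y w = .green i' ∧ N w x = .yellow ∧
            l = .red (fB i') (fB i))) by
      obtain ⟨l, hl⟩ := hs
      exact ⟨l, fun _ => ⟨fun h => (hwx h).elim, fun h => (hwy h).elim, fun _ _ => hl⟩⟩
    have cx := hN.conv w hwn x hx
    have cy := hN.conv w hwn y hy
    by_cases g1 : ∃ i' i, N w x = .green i' ∧ a = .green i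
    · obtain ⟨i', i, e1, e2⟩ := g1
      by_cases y2 : N w y = .yellow ∧ b.conv = .yellow
      · obtain ⟨e3, e4⟩ := y2
        have e5 := conv_yellow e4
        have e6 : N x w = .green i' := by rw [cx, e1]; rfl
        have hii : i' ≠ i := by
          rintro rfl
          exact hw ⟨w, hwn, by rw [e6, e2], by rw [e3, e5]⟩
        refine ⟨.red (fA i') (fA i), ?_, ?_, Or.inr (Or.inr (Or.inl
          ⟨i, i', e2, e5, e6, e3, rfl⟩))⟩
        · rw [e1, e2]; exact hfA i' i hii
        · rw [e3, e4]; simp [Tri]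
      · exact ⟨.black, tri_black hp ha (by simp [e1]), tri_black hq hb' (by tauto), by simp⟩
    by_cases g2 : ∃ i' i, N w y = .green i' ∧ b.conv = .green i
    · obtain ⟨i', i, e1, e2⟩ := g2
      by_cases y2 : N w x = .yellow ∧ a = .yellow
      · obtain ⟨e3, e4⟩ := y2
        have e5 := conv_green e2
        have e6 : N y w = .green i' := by rw [cy, e1]; rfl
        have hii : i' ≠ i := by
          rintro rfl
          refine hw ⟨w, hwn, ?_, by rw [e1, e5]⟩
          rw [cx, e3, e4]; rfl
        refine ⟨.red (fB i') (fB i), ?_, ?_, Or.inr (Or.inr (Or.inr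
          ⟨i, i', e4, e5, e6, e3, rfl⟩))⟩
        · rw [e3, e4]; simp [Tri]
        · rw [e1, e2]; exact hfB i' i hii
      · exact ⟨.black, tri_black hp ha (by tauto), tri_black hq hb' (by simp [e1]), by simp⟩
    exact ⟨.white, tri_white hp ha (fun i i' h h' => g1 ⟨i, i', h, h'⟩),
      tri_white hq hb' (fun i i' h h' => g2 ⟨i, i', h, h'⟩), by simp⟩
  choose L hL using hL
  have Lx : L x = a := (hL x hx).1 rfl
  have Ly : L y = b.conv := (hL y hy).2.1 rfl
  have Lid : ∀ w < n, L w ≠ .id := by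
    intro w hwn h
    by_cases hwx : w = x
    · subst hwx; rw [Lx] at h; exact ha h
    by_cases hwy : w = y
    · subst hwy; rw [Ly] at h; exact hb' h
    obtain ⟨-, -, h' | h' | ⟨i, i', -, -, -, -, h'⟩ | ⟨i, i', -, -, -, -, h'⟩⟩ :=
      (hL w hwn).2.2 hwx hwy <;> simp [h] at h'
  have Lgreen : ∀ w < n, ∀ i, L w = .green i → w = x ∨ w = y := by
    intro w hwn i h
    by_contra hc
    push Not at hc
    obtain ⟨-, -, h' | h' | ⟨i, i', -, -, -, -, h'⟩ | ⟨i, i', -, -, -, -, h'⟩⟩ :=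
      (hL w hwn).2.2 hc.1 hc.2 <;> simp [h] at h'
  have Lyellow : ∀ w < n, L w = .yellow → w = x ∨ w = y := by
    intro w hwn h
    by_contra hc
    push Not at hc
    obtain ⟨-, -, h' | h' | ⟨i, i', -, -, -, -, h'⟩ | ⟨i, i', -, -, -, -, h'⟩⟩ :=
      (hL w hwn).2.2 hc.1 hc.2 <;> simp [h] at h'
  have core_symm : ∀ u < n, ∀ v < n, Tri (PC H H) (N u v) (L v) (L u) →
      Tri (PC H H) (N v u) (L u) (L v) := by
    intro u hu v hv h
    rw [hN.conv u hu v hv]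
    exact tri_p1 hP h
  have core_x : ∀ v < n, Tri (PC H H) (N v x) (L x) (L v) := by
    intro v hv
    rw [Lx]
    by_cases hvx : v = x
    · subst hvx; rw [hN.refl v hv, Lx, tri_id_left]
    by_cases hvy : v = y
    · subst hvy
      rw [Ly, hN.conv x hx v hy]
      exact tri_p1 hP (tri_p2 hP hab)
    exact ((hL v hv).2.2 hvx hvy).1
  have core_y : ∀ v < n, Tri (PC H H) (N v y) (L y) (L v) := by
    intro v hv
    by_cases hvx : v = x
    · subst hvx; exact core_symm _ hy _ hx (core_x y hy)
    by_cases hvy : v = y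
    · subst hvy; rw [hN.refl v hv, tri_id_left]
    rw [Ly]
    exact ((hL v hv).2.2 hvx hvy).2.1
  have core : ∀ u < n, ∀ v < n, Tri (PC H H) (N u v) (L v) (L u) := by
    intro u hu v hv
    by_cases hvx : v = x
    · subst hvx; exact core_x u hu
    by_cases hvy : v = y
    · subst hvy; exact core_y u hu
    by_cases hux : u = x
    · subst hux; exact core_symm _ hv _ hu (core_x v hv)
    by_cases huy : u = y
    · subst huy; exact core_symm _ hv _ hu (core_y v hv)
    by_cases huv : u = v
    · subst huv; rw [hN.refl u hu, tri_id_left]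
    have hid : N u v ≠ .id := fun h => huv (hN.ident u hu v hv h)
    obtain ⟨-, -, h1⟩ := (hL u hu).2.2 hux huy
    obtain ⟨-, -, h2⟩ := (hL v hv).2.2 hvx hvy
    refine tri_gen hid ?_ ?_ ?_
    · rcases h2 with h | h | ⟨i, i', -, -, -, -, h⟩ | ⟨i, i', -, -, -, -, h⟩ <;> simp [h]
    · rcases h1 with h | h | ⟨i, i', -, -, -, -, h⟩ | ⟨i, i', -, -, -, -, h⟩ <;> simp [h]
    rintro ⟨j1, j2, r2⟩ ⟨k1, k2, r1⟩
    rcases h2 with h | h | ⟨i, i', a1, b1, p1, q1, h⟩ | ⟨i, i', a1, b1, p1, q1, h⟩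
    · simp [r2] at h
    · simp [r2] at h
    · rcases h1 with h' | h' | ⟨k, k', a2, b2, p2, q2, h'⟩ | ⟨k, k', a2, b2, p2, q2, h'⟩
      · simp [r1] at h'
      · simp [r1] at h'
      · rw [a1] at a2
        obtain rfl : i = k := by simpa using a2
        rw [h, h', hA u hu v hv k' i' huv p2 p1 q2 q1]
        simp [Tri]
      · simp [a1] at a2
    · rcases h1 with h' | h' | ⟨k, k', a2, b2, p2, q2, h'⟩ | ⟨k, k', a2, b2, p2, q2, h'⟩
      · simp [r1] at h'
      · simp [r1] at h'
      · simp [a1] at a2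
      · rw [b1] at b2
        obtain rfl : i = k := by simpa using b2
        rw [h, h', hB u hu v hv k' i' huv p2 p1 q2 q1]
        simp [Tri]
  -- the new network
  let N' : ℕ → ℕ → RbAtom H.V H.V := fun u v =>
    if u < n then (if v < n then N u v else L u) else (if v < n then (L v).conv else .id)
  have Noo : ∀ u < n, ∀ v < n, N' u v = N u v := by
    intro u hu v hv; simp [N', hu, hv]
  have Non : ∀ u < n, N' u n = L u := by
    intro u hu; simp [N', hu]
  have Nno : ∀ v < n, N' n v = (L v).conv := by
    intro v hv; simp [N', hv]
  have Nnn : N' n n = .id := by simp [N']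
  have cases' : ∀ u < n + 1, u < n ∨ u = n := fun u hu => by omega
  -- members of cones with small base
  have smallApex : ∀ y' < n, ∃ f : H.V → H.V, (∀ i i', i ≠ i' → PC H H i i' (f i) (f i')) ∧
      ∀ i i', x ≠ y → L x = .green i → L y = .green i' → N x y' = .yellow → N y y' = .yellow →
        N x y = .red (f i) (f i') := by
    intro y' hy'
    obtain ⟨f, hf, h⟩ := small_cone hH (N x y)
      (fun i => x ≠ y ∧ L x = .green i ∧ N x y' = .yellow)
      (fun i => L y = .green i ∧ N y y' = .yellow)
      (by rintro i i' ⟨-, h, -⟩ ⟨-, h', -⟩; rw [h] at h'; simpa using h')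
      (by rintro i i' ⟨h, -⟩ ⟨h', -⟩; rw [h] at h'; simpa using h')
      (by
        rintro i i' ⟨h0, h1, h2⟩ ⟨h3, h4⟩
        have t2 := hN.tri x hx y hy y' hy'
        rw [h2, h4] at t2
        refine forced_red ?_ t2 (fun h => h0 (hN.ident x hx y hy h))
        have t3 := core x hx y hy
        rw [h1, h3] at t3
        exact tri_green_swap t3)
    exact ⟨f, hf, fun i i' h0 h1 h2 h3 h4 => h i i' ⟨h0, h1, h3⟩ ⟨h2, h4⟩⟩
  have smallBase : ∀ x' < n, ∃ f : H.V → H.V, (∀ i i', i ≠ i' → PC H H i i' (f i) (f i')) ∧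
      ∀ i i', x ≠ y → N x' x = .green i → N x' y = .green i' → L x = .yellow → L y = .yellow →
        N x y = .red (f i) (f i') := by
    intro x' hx'
    obtain ⟨f, hf, h⟩ := small_cone hH (N x y)
      (fun i => x ≠ y ∧ N x' x = .green i ∧ L x = .yellow)
      (fun i => N x' y = .green i ∧ L y = .yellow)
      (by rintro i i' ⟨-, h, -⟩ ⟨-, h', -⟩; rw [h] at h'; simpa using h')
      (by rintro i i' ⟨h, -⟩ ⟨h', -⟩; rw [h] at h'; simpa using h')
      (by
        rintro i i' ⟨h0, h1, h2⟩ ⟨h3, h4⟩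
        have t1 := hN.tri x' hx' x hx y hy
        rw [h1, h3] at t1
        have t2 := core x hx y hy
        rw [h2, h4] at t2
        exact forced_red t1 t2 (fun h => h0 (hN.ident x hx y hy h)))
    exact ⟨f, hf, fun i i' h0 h1 h2 h3 h4 => h i i' ⟨h0, h1, h3⟩ ⟨h2, h4⟩⟩
  have convred : N y x = (N x y).conv := hN.conv x hx y hy
  refine ⟨N', ⟨?_, ?_, ?_, ?_, ?_⟩, Noo, by rw [Non x hx, Lx],
    by rw [Nno y hy, Ly, rb_conv_conv]⟩
  · intro u hu
    rcases cases' u hu with hu | rfl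
    · rw [Noo u hu u hu, hN.refl u hu]
    · exact Nnn
  · intro u hu v hv h
    rcases cases' u hu with hu | rfl <;> rcases cases' v hv with hv | rfl
    · rw [Noo u hu v hv] at h; exact hN.ident u hu v hv h
    · rw [Non u hu] at h; exact (Lid u hu h).elim
    · rw [Nno v hv] at h; exact (Lid v hv (conv_id h)).elim
    · rfl
  · intro u hu v hv
    rcases cases' u hu with hu | rfl <;> rcases cases' v hv with hv | rfl
    · rw [Noo u hu v hv, Noo v hv u hu]; exact hN.conv u hu v hv
    · rw [Non u hu, Nno u hu]
    · rw [Nno v hv, Non v hv, rb_conv_conv]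
    · rw [Nnn]; rfl
  · intro u hu v hv w hw
    rcases cases' u hu with hu | rfl <;> rcases cases' v hv with hv | rfl <;>
      rcases cases' w hw with hw | rfl
    · rw [Noo u hu v hv, Noo v hv w hw, Noo u hu w hw]; exact hN.tri u hu v hv w hw
    · rw [Noo u hu v hv, Non v hv, Non u hu]; exact core u hu v hv
    · rw [Non u hu, Nno w hw, Noo u hu w hw]; exact tri_p2 hP (core u hu w hw)
    · rw [Non u hu, Nnn, tri_id_mid]
    · rw [Nno v hv, Noo v hv w hw, Nno w hw, hN.conv w hw v hv]
      exact tri_p3 hP (core w hw v hv)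
    · rw [Nno v hv, Non v hv, Nnn, tri_id_right]
    · rw [Nnn, tri_id_left]
    · rw [Nnn, tri_id_left]
  · intro x' hx' y' hy'
    rcases cases' x' hx' with hx' | rfl
    · rcases cases' y' hy' with hy' | rfl
      · -- both old
        by_cases hz : (∃ i, L x' = .green i) ∧ L y' = .yellow
        · obtain ⟨⟨i, hi⟩, hyy⟩ := hz
          have hne : x' ≠ y' := by rintro rfl; rw [hi] at hyy; simp at hyy
          obtain ⟨f, hf, hold, hnew⟩ : ∃ f : H.V → H.V,
              (∀ i i', i ≠ i' → PC H H i i' (f i) (f i')) ∧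
              (∀ w < n, ∀ w' < n, ∀ i i', w ≠ w' → N x' w = .green i → N x' w' = .green i' →
                N w y' = .yellow → N w' y' = .yellow → N w w' = .red (f i) (f i')) ∧
              (∀ w < n, ∀ i', N x' w = .green i' → N w y' = .yellow →
                L w = .red (f i') (f i)) := by
            have nomix : ∀ w < n, ∀ i', N x' w = .green i' → N w y' = .yellow →
                (w ≠ x' ∧ w ≠ y' ∧ L w ≠ .white ∧ L w ≠ .black) := by
              intro w hwn i' h1 h2
              refine ⟨?_, ?_, ?_⟩
              · rintro rfl; rw [hN.refl w hwn] at h1; simp at h1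
              · rintro rfl; rw [hN.refl w hwn] at h2; simp at h2
              · have t1 := core w hwn x' hx'
                have t2 := core w hwn y' hy'
                rw [hN.conv x' hx' w hwn, h1, hi] at t1
                rw [h2, hyy] at t2
                exact forced_red' t1 t2
            rcases Lgreen x' hx' i hi with rfl | rfl
            · have : y' = y := (Lyellow y' hy' hyy).resolve_left hne.symm
              subst this
              refine ⟨fA, hfA, hA, ?_⟩
              intro w hwn i' h1 h2
              obtain ⟨n1, n2, n3, n4⟩ := nomix w hwn i' h1 h2
              obtain ⟨-, -, h | h | ⟨k, k', a1, b1, p1, q1, h⟩ | ⟨k, k', a1, b1, p1, q1, h⟩⟩ :=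
                (hL w hwn).2.2 n1 n2
              · exact (n3 h).elim
              · exact (n4 h).elim
              · rw [Lx, a1] at hi
                rw [p1] at h1
                obtain rfl : k = i := by simpa using hi
                obtain rfl : k' = i' := by simpa using h1
                exact h
              · rw [Lx, a1] at hi; simp at hi
            · have : y' = x := (Lyellow y' hy' hyy).resolve_right hne.symm
              subst this
              refine ⟨fB, hfB, hB, ?_⟩
              intro w hwn i' h1 h2
              obtain ⟨n1, n2, n3, n4⟩ := nomix w hwn i' h1 h2
              obtain ⟨-, -, h | h | ⟨k, k', a1, b1, p1, q1, h⟩ | ⟨k, k', a1, b1, p1, q1, h⟩⟩ :=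
                (hL w hwn).2.2 n2 n1
              · exact (n3 h).elim
              · exact (n4 h).elim
              · rw [Lx, a1] at hyy; simp at hyy
              · rw [Ly, b1] at hi
                rw [p1] at h1
                obtain rfl : k = i := by simpa [RbAtom.conv] using hi
                obtain rfl : k' = i' := by simpa using h1
                exact h
          refine ⟨f, hf, ?_⟩
          intro w hw w' hw' k k' hww h1 h2 h3 h4
          rcases cases' w hw with hw | rfl <;> rcases cases' w' hw' with hw' | rfl
          · rw [Noo _ hx' _ hw] at h1
            rw [Noo _ hx' _ hw'] at h2
            rw [Noo _ hw _ hy'] at h3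
            rw [Noo _ hw' _ hy'] at h4
            rw [Noo _ hw _ hw']
            exact hold w hw w' hw' k k' hww h1 h2 h3 h4
          · rw [Noo _ hx' _ hw] at h1
            rw [Non _ hx', hi] at h2
            rw [Noo _ hw _ hy'] at h3
            rw [Non _ hw]
            obtain rfl : i = k' := by simpa using h2
            exact hnew w hw k h1 h3
          · rw [Noo _ hx' _ hw'] at h2
            rw [Non _ hx', hi] at h1
            rw [Noo _ hw' _ hy'] at h4
            rw [Nno _ hw']
            obtain rfl : i = k := by simpa using h1
            rw [hnew w' hw' k' h2 h4]
            rfl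
          · exact (hww rfl).elim
        · obtain ⟨f, hf, hold⟩ := hN.cone x' hx' y' hy'
          have nz : ∀ k, N' x' n = .green k → N' n y' = .yellow → False := by
            intro k h1 h2
            rw [Non _ hx'] at h1
            rw [Nno _ hy'] at h2
            exact hz ⟨⟨k, h1⟩, conv_yellow h2⟩
          refine ⟨f, hf, ?_⟩
          intro w hw w' hw' k k' hww h1 h2 h3 h4
          rcases cases' w hw with hw | rfl
          swap
          · exact (nz k h1 h3).elim
          rcases cases' w' hw' with hw' | rfl
          swap
          · exact (nz k' h2 h4).elim
          rw [Noo _ hx' _ hw] at h1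
          rw [Noo _ hx' _ hw'] at h2
          rw [Noo _ hw _ hy'] at h3
          rw [Noo _ hw' _ hy'] at h4
          rw [Noo _ hw _ hw']
          exact hold w hw w' hw' k k' hww h1 h2 h3 h4
      · -- the base is new
        obtain ⟨f, hf, hs⟩ := smallBase x' hx'
        refine ⟨f, hf, ?_⟩
        intro w hw w' hw' k k' hww h1 h2 h3 h4
        rcases cases' w hw with hw | rfl
        swap
        · rw [Nnn] at h3; simp at h3
        rcases cases' w' hw' with hw' | rfl
        swap
        · rw [Nnn] at h4; simp at h4
        rw [Noo _ hx' _ hw] at h1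
        rw [Noo _ hx' _ hw'] at h2
        rw [Non _ hw] at h3
        rw [Non _ hw'] at h4
        rw [Noo _ hw _ hw']
        rcases Lyellow w hw h3 with rfl | rfl <;> rcases Lyellow w' hw' h4 with rfl | rfl
        · exact (hww rfl).elim
        · exact hs k k' hww h1 h2 h3 h4
        · rw [convred, hs k' k hww.symm h2 h1 h4 h3]; rfl
        · exact (hww rfl).elim
    · -- the apex is new
      rcases cases' y' hy' with hy' | rfl
      · obtain ⟨f, hf, hs⟩ := smallApex y' hy'
        refine ⟨f, hf, ?_⟩
        intro w hw w' hw' k k' hww h1 h2 h3 h4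
        rcases cases' w hw with hw | rfl
        swap
        · rw [Nnn] at h1; simp at h1
        rcases cases' w' hw' with hw' | rfl
        swap
        · rw [Nnn] at h2; simp at h2
        rw [Nno _ hw] at h1
        rw [Nno _ hw'] at h2
        replace h1 := conv_green h1
        replace h2 := conv_green h2
        rw [Noo _ hw _ hy'] at h3
        rw [Noo _ hw' _ hy'] at h4
        rw [Noo _ hw _ hw']
        rcases Lgreen w hw k h1 with rfl | rfl <;> rcases Lgreen w' hw' k' h2 with rfl | rfl
        · exact (hww rfl).elim
        · exact hs k k' hww h1 h2 h3 h4
        · rw [convred, hs k' k hww.symm h2 h1 h4 h3]; rfl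
        · exact (hww rfl).elim
      · refine ⟨fun i => i, fun i i' h => ⟨h, h, Iff.rfl, Iff.rfl⟩, ?_⟩
        intro w hw w' hw' k k' hww h1 h2 h3 h4
        rcases cases' w hw with hw | rfl
        · rw [Nno _ hw] at h1
          rw [Non _ hw] at h3
          rw [conv_green h1] at h3
          simp at h3
        · rw [Nnn] at h1; simp at h1

theorem rep_HH (H : Digraph') [Finite H.V] (hH : Homog H)
    (hF : ∀ i i', i ≠ i' → ∃ j j', PC H H i i' j j') :
    @Representable _ (triRA (PC H H) (PC_symm H H) hF) := by
  have hfin : Finite (RbAtom H.V H.V) := rbAtom_finite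
  have hP := PC_symm H H
  let St := {p : ℕ × (ℕ → ℕ → RbAtom H.V H.V) // GoodNet H p.1 p.2}
  let D := ℕ × ℕ × RbAtom H.V H.V × RbAtom H.V H.V
  have step : ∀ (s : St) (d : D), ∃ s' : St, s.1.1 ≤ s'.1.1 ∧
      (∀ u < s.1.1, ∀ v < s.1.1, s'.1.2 u v = s.1.2 u v) ∧
      (d.1 < s.1.1 → d.2.1 < s.1.1 → Tri (PC H H) d.2.2.1 d.2.2.2 (s.1.2 d.1 d.2.1) →
        ∃ w < s'.1.1, s'.1.2 d.1 w = d.2.2.1 ∧ s'.1.2 w d.2.1 = d.2.2.2) := by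
    rintro ⟨⟨n, N⟩, hN⟩ ⟨x, y, a, b⟩
    dsimp only
    by_cases h : x < n ∧ y < n ∧ Tri (PC H H) a b (N x y) ∧ ¬ ∃ w < n, N x w = a ∧ N w y = b
    · obtain ⟨hx, hy, ht, hw⟩ := h
      obtain ⟨N', hN', e1, e2, e3⟩ := good_ext hH hN hx hy ht hw
      exact ⟨⟨(n + 1, N'), hN'⟩, Nat.le_succ n, e1, fun _ _ _ => ⟨n, Nat.lt_succ_self n, e2, e3⟩⟩
    · refine ⟨⟨(n, N), hN⟩, le_rfl, fun _ _ _ _ => rfl, fun hx hy ht => ?_⟩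
      by_contra hc
      exact h ⟨hx, hy, ht, hc⟩
  choose next hle hagree hwit using step
  have init : GoodNet H 1 (fun _ _ => .id) := by
    refine ⟨fun _ _ => rfl, fun x hx y hy _ => by omega, fun _ _ _ _ => rfl,
      fun _ _ _ _ _ _ => tri_id_left.2 rfl, fun _ _ _ _ => ⟨fun i => i,
        fun i i' h => ⟨h, h, Iff.rfl, Iff.rfl⟩, ?_⟩⟩
    intro w hw w' hw' i i' hne
    omega
  have : Nonempty D := ⟨(0, 0, .id, .id)⟩
  obtain ⟨dec, hdec⟩ := exists_surjective_nat D
  let s : ℕ → St := fun m => Nat.rec ⟨(1, fun _ _ => .id), init⟩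
    (fun m p => next p (dec (Nat.unpair m).1)) m
  have s0 : s 0 = ⟨(1, fun _ _ => .id), init⟩ := rfl
  have ss : ∀ m, s (m + 1) = next (s m) (dec (Nat.unpair m).1) := fun m => rfl
  have mono : ∀ m k, m ≤ k → (s m).1.1 ≤ (s k).1.1 ∧
      ∀ u < (s m).1.1, ∀ v < (s m).1.1, (s k).1.2 u v = (s m).1.2 u v := by
    intro m k h
    induction k, h using Nat.le_induction with
    | base => exact ⟨le_rfl, fun _ _ _ _ => rfl⟩
    | succ k hk ih =>
      rw [ss]
      refine ⟨ih.1.trans (hle _ _), fun u hu v hv => ?_⟩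
      rw [hagree _ _ u (hu.trans_le ih.1) v (hv.trans_le ih.1)]
      exact ih.2 u hu v hv
  clear_value s
  let X := {x : ℕ // ∃ m, x < (s m).1.1}
  have hX : ∀ x : X, ∃ m, x.1 < (s m).1.1 := fun x => x.2
  choose st hst using hX
  let M : X → X → RbAtom H.V H.V := fun x y => (s (max (st x) (st y))).1.2 x.1 y.1
  have hM : ∀ x y : X, ∀ m, x.1 < (s m).1.1 → y.1 < (s m).1.1 → M x y = (s m).1.2 x.1 y.1 := by
    intro x y m hx hy
    have k1 := mono m (max m (max (st x) (st y))) (le_max_left _ _)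
    have k2 := mono (max (st x) (st y)) (max m (max (st x) (st y))) (le_max_right _ _)
    have l1 := mono (st x) (max (st x) (st y)) (le_max_left _ _)
    have l2 := mono (st y) (max (st x) (st y)) (le_max_right _ _)
    rw [← k1.2 _ hx _ hy]
    exact (k2.2 _ ((hst x).trans_le l1.1) _ ((hst y).trans_le l2.1)).symm
  have hstage : ∀ x y z : X, ∃ m, x.1 < (s m).1.1 ∧ y.1 < (s m).1.1 ∧ z.1 < (s m).1.1 := by
    intro x y z
    refine ⟨max (st x) (max (st y) (st z)), ?_, ?_, ?_⟩
    · exact (hst x).trans_le (mono _ _ (by simp)).1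
    · exact (hst y).trans_le (mono _ _ (by simp)).1
    · exact (hst z).trans_le (mono _ _ (by simp)).1
  have Mid : ∀ x y, M x y = .id ↔ x = y := by
    intro x y
    obtain ⟨m, h1, h2, -⟩ := hstage x y y
    rw [hM x y m h1 h2]
    constructor
    · intro h; exact Subtype.ext ((s m).2.ident _ h1 _ h2 h)
    · rintro rfl; exact (s m).2.refl _ h1
  have Mconv : ∀ x y, M y x = (M x y).conv := by
    intro x y
    obtain ⟨m, h1, h2, -⟩ := hstage x y y
    rw [hM x y m h1 h2, hM y x m h2 h1]
    exact (s m).2.conv _ h1 _ h2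
  have Mtri : ∀ x y z, Tri (PC H H) (M x y) (M y z) (M x z) := by
    intro x y z
    obtain ⟨m, h1, h2, h3⟩ := hstage x y z
    rw [hM x y m h1 h2, hM y z m h2 h3, hM x z m h1 h3]
    exact (s m).2.tri _ h1 _ h2 _ h3
  have Mwit : ∀ x y a b, Tri (PC H H) a b (M x y) → ∃ z, M x z = a ∧ M z y = b := by
    intro x y a b h
    obtain ⟨m, h1, h2, -⟩ := hstage x y y
    obtain ⟨q, hq⟩ := hdec (x.1, y.1, a, b)
    have hmk : m ≤ Nat.pair q m := Nat.right_le_pair q m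
    have h1' := h1.trans_le (mono _ _ hmk).1
    have h2' := h2.trans_le (mono _ _ hmk).1
    have hs := ss (Nat.pair q m)
    rw [Nat.unpair_pair, hq] at hs
    have hw := hwit (s (Nat.pair q m)) (x.1, y.1, a, b) h1' h2'
      (by rw [← hM x y _ h1' h2']; exact h)
    rw [← hs] at hw
    obtain ⟨w, hw, e1, e2⟩ := hw
    have g1 := h1'.trans_le (mono _ _ (Nat.le_succ (Nat.pair q m))).1
    have g2 := h2'.trans_le (mono _ _ (Nat.le_succ (Nat.pair q m))).1
    refine ⟨⟨w, _, hw⟩, ?_, ?_⟩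
    · rw [hM x ⟨w, _, hw⟩ _ g1 hw]; exact e1
    · rw [hM ⟨w, _, hw⟩ y _ hw g2]; exact e2
  let o : X := ⟨0, 0, by rw [s0]; exact Nat.one_pos⟩
  refine ⟨X, fun A => {p | M p.1 p.2 ∈ A}, ?_, ?_, ?_, ?_, ?_, ?_⟩
  · intro A B hAB
    ext a
    have h1 : Tri (PC H H) a a.conv (M o o) := by
      rw [(Mid o o).2 rfl, tri_id_right, rb_conv_conv]
    obtain ⟨z, hz, -⟩ := Mwit o o a a.conv h1
    have := Set.ext_iff.1 hAB (o, z)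
    simpa [hz] using this
  · intro A B; rfl
  · intro A
    ext p
    constructor
    · intro h; exact ⟨trivial, h⟩
    · intro h; exact h.2
  · intro A B
    ext ⟨x, y⟩
    constructor
    · rintro ⟨a, ha, b, hb, h⟩
      obtain ⟨z, rfl, rfl⟩ := Mwit x y a b h
      exact ⟨z, ha, hb⟩
    · rintro ⟨z, h1, h2⟩
      exact ⟨_, h1, _, h2, Mtri x z y⟩
  · intro A
    ext ⟨x, y⟩
    show (M x y).conv ∈ A ↔ M y x ∈ A
    rw [Mconv x y]
  · ext ⟨x, y⟩
    exact Mid x y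

end Rep

theorem rra_not_c_variable_axiomatisable_digraph (G H : Digraph')
    [Finite G.V] [Finite H.V] (c : ℕ)
    (h1 : ExSurvivesModD G H (c + 3))
    (h2 : ∀ u v u' v' : H.V, u ≠ v → u' ≠ v' →
        (H.E u v ↔ H.E u' v') → (H.E v u ↔ H.E v' u') →
        ∃ f : H.V → H.V, Function.Bijective f ∧
          (∀ x y : H.V, x ≠ y → (H.E x y ↔ H.E (f x) (f y))) ∧ f u = u' ∧ f v = v')
    (h3 : ¬ ∃ f : G.V → H.V, IsDigraphEmbedding G H f) :
    ¬ ∃ T : Set (RAFormula c), (∀ φ ∈ T, φ.freeVars = ∅) ∧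
        ∀ (A : Type) [RelationAlgebra A],
          (Representable A ↔ ∀ φ ∈ T, RAFormula.Sat (RAOps.ofClass A) (fun _ => ⊥) φ) := by
  obtain ⟨Inv, hinit, hsafe, hG, hH⟩ := h1
  have S : ColSys G H (c + 3) Inv := ⟨fun g h hi hw => hsafe g h hi (Or.inl hw), hG, hH⟩
  have hne : Nonempty G.V → Nonempty H.V := by
    rintro ⟨x⟩
    obtain ⟨y, -⟩ := S.same hinit x
    exact ⟨y⟩
  have hHF : ∀ i i', i ≠ i' → ∃ j j', PC H H i i' j j' :=
    fun i i' h => ⟨i, i', h, h, Iff.rfl, Iff.rfl⟩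
  have hGF : ∀ i i', i ≠ i' → ∃ j j', PC G H i i' j j' := by
    intro i i' hii
    have n01 : Fin.natAdd c (0 : Fin 3) ≠ Fin.natAdd c (1 : Fin 3) := by simp
    have n02 : Fin.natAdd c (0 : Fin 3) ≠ Fin.natAdd c (2 : Fin 3) := by simp
    have n10 : Fin.natAdd c (1 : Fin 3) ≠ Fin.natAdd c (0 : Fin 3) := by simp
    have n12 : Fin.natAdd c (1 : Fin 3) ≠ Fin.natAdd c (2 : Fin 3) := by simp
    obtain ⟨k, g1, h1, i1, a1, b1, -⟩ := S.extend hinit i n01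
    obtain ⟨k', g2, h2, i2, a2, b2, ht⟩ := S.extend i1 i' n02
    have := ht _ n10 n12
    rw [← this.1] at a1
    rw [← this.2] at b1
    exact ⟨k, k', hii, fun h => hii ((S.eqv i2 a1 b1 a2 b2).2 h), S.edge i2 a1 b1 a2 b2,
      S.edge i2 a2 b2 a1 b1⟩
  have hom : Homog H := by
    intro i i' j j' hp
    obtain ⟨f, hf, he, e1, e2⟩ := h2 i i' j j' hp.1 hp.2.1 hp.2.2.1 hp.2.2.2
    exact ⟨f, fun u v h => ⟨h, fun h' => h (hf.1 h'), he u v h, he v u h.symm⟩, e1, e2⟩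
  rintro ⟨T, -, hT⟩
  have r1 := @hT _ (triRA (PC H H) (PC_symm H H) hHF)
  have r2 := @hT _ (triRA (PC G H) (PC_symm G H) hGF)
  refine not_rep G H hne hGF h3 (r2.2 ?_)
  intro φ hφ
  have q := r1.1 (rep_HH H hom hHF) φ hφ
  rw [ofClass_tri] at q ⊢
  refine (sat_transfer S φ _ _ (fun _ => ∅) (fun _ => ∅) ⟨hinit, ?_, ?_, ?_⟩).2 q
  · intro t i; exact Iff.rfl
  · intro t i; exact Iff.rfl
  · intro t a a' _; exact Iff.rfl


end Digraphs
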